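/- arXiv:2206.04955 — 10 statements merged into one kernel-verified Lean document; each statement's English description precedes it below -/
import Mathlib

section
/- For every n ≥ 1, the number of binary operations · : Fin n → Fin n → Fin n that make Fin n an L-algebra with logical unit the largest element n−1 and whose natural order (x ≤ y iff x·y = e) coincides with the standard linear order on Fin n equals the Bell number B(n−1), i.e. the number of equivalence relations (Setoids) on a set with n−1 elements. -/
/-- The L-algebra axioms for a binary operation `op` with logical unit `e`. -/
def IsLAlgebra {X : Type*} (op : X → X → X) (e : X) : Prop :=
  (∀ x, op e x = x) ∧ (∀ x, op x e = e) ∧ (∀ x, op x x = e) ∧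
  (∀ x y z, op (op x y) (op x z) = op (op y x) (op y z)) ∧
  (∀ x y, op x y = e → op y x = e → x = y)

/-- Depth-coded linear L-algebras on `{0,…,n}`, where `0` is the unit. -/
def DepthAlg (n : ℕ) (f : ℕ → ℕ → ℕ) : Prop :=
  (∀ a b, a < b → b ≤ n → 0 < f a b ∧ f a b ≤ n) ∧
  (∀ a b, (b ≤ a ∨ n < b) → f a b = 0) ∧
  (∀ b, b ≤ n → f 0 b = b) ∧
  (∀ a b c, a < b → b < c → c ≤ n → f (f a b) (f a c) = f b c)

theorem DepthAlg.mono {n f} (h : DepthAlg n f) {a b c : ℕ} (hab : a ≤ b) (hbc : b < c)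
    (hc : c ≤ n) : f a b < f a c := by
  obtain ⟨h1, h2, h3, h4⟩ := h
  rcases hab.eq_or_lt with rfl | hab
  · rw [h2 a a (Or.inl le_rfl)]
    exact (h1 a c hbc hc).1
  · by_contra hcon
    have e1 := h4 a b c hab hbc hc
    rw [h2 _ _ (Or.inl (not_lt.1 hcon))] at e1
    have := (h1 b c hbc hc).1
    omega

theorem DepthAlg.le_n {n f} (h : DepthAlg n f) (a b : ℕ) : f a b ≤ n := by
  by_cases hb : a < b ∧ b ≤ n
  · exact (h.1 a b hb.1 hb.2).2
  · rw [h.2.1 a b (by omega)]; omega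

theorem DepthAlg.le {n f} (h : DepthAlg n f) (a b : ℕ) : f a b ≤ b := by
  by_cases hb : a < b ∧ b ≤ n
  · have key : ∀ k b, b + k = n → a < b → f a b ≤ b := by
      intro k
      induction k with
      | zero => intro b hb ha; have := h.le_n a b; omega
      | succ k ih =>
        intro b hb ha
        have h1 := ih (b + 1) (by omega) (by omega)
        have h2 := h.mono (a := a) (b := b) (c := b + 1) (by omega) (by omega) (by omega)
        omega
    exact key (n - b) b (by omega) hb.1
  · rw [h.2.1 a b (by omega)]; omega

theorem DepthAlg.fix {n f} (h : DepthAlg n f) {a p b : ℕ} (hap : a < p) (hp : f a p = p)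
    (hpb : p ≤ b) (hb : b ≤ n) : f a b = b := by
  induction b, hpb using Nat.le_induction with
  | base => exact hp
  | succ b hpb ih =>
    have h1 := ih (by omega)
    have h2 := h.mono (a := a) (b := b) (c := b + 1) (by omega) (by omega) (by omega)
    have h3 := h.le a (b + 1)
    omega

/-- Extension of a depth-coded algebra on `{0,…,m}` by a last run. -/
def extAlg (m N : ℕ) (f : ℕ → ℕ → ℕ) (v : ℕ → ℕ) (a b : ℕ) : ℕ :=
  if b ≤ a ∨ N < b then 0 else if b ≤ m then f a b else if a ≤ m then b else
  if a = m + 1 then v b else if v b < b then extAlg m N f v (v a) (v b) else 0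
termination_by b

section ext
variable {m N : ℕ} {f : ℕ → ℕ → ℕ} {v : ℕ → ℕ}

theorem ext_zero {a b : ℕ} (h : b ≤ a ∨ N < b) : extAlg m N f v a b = 0 := by
  rw [extAlg, if_pos h]

theorem ext_old {a b : ℕ} (h : a < b) (hN : b ≤ N) (hm : b ≤ m) :
    extAlg m N f v a b = f a b := by
  rw [extAlg, if_neg (by omega), if_pos hm]

theorem ext_id {a b : ℕ} (ha : a ≤ m) (hN : b ≤ N) (hm : m < b) :
    extAlg m N f v a b = b := by
  rw [extAlg, if_neg (by omega), if_neg (by omega), if_pos ha]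

theorem ext_v {b : ℕ} (hN : b ≤ N) (hm : m + 1 < b) :
    extAlg m N f v (m + 1) b = v b := by
  rw [extAlg, if_neg (by omega), if_neg (by omega), if_neg (by omega), if_pos rfl]

theorem ext_rec {a b : ℕ} (h : a < b) (hN : b ≤ N) (hm : m + 1 < a) (hv : v b < b) :
    extAlg m N f v a b = extAlg m N f v (v a) (v b) := by
  rw [extAlg, if_neg (by omega), if_neg (by omega), if_neg (by omega), if_neg (by omega),
    if_pos hv]

theorem ext_depthAlg (hf : DepthAlg m f)
    (hv : ∀ b, m + 1 < b → b ≤ N → 0 < v b ∧ v b < b)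
    (hmono : ∀ b c, m + 1 < b → b < c → c ≤ N → v b < v c) :
    DepthAlg N (extAlg m N f v) := by
  have hle : ∀ b a, a < b → b ≤ N → 0 < extAlg m N f v a b ∧ extAlg m N f v a b ≤ b := by
    intro b
    induction b using Nat.strong_induction_on with
    | _ b ih =>
      intro a hab hb
      by_cases hbm : b ≤ m
      · rw [ext_old hab hb hbm]
        exact ⟨(hf.1 a b hab hbm).1, hf.le a b⟩
      by_cases ham : a ≤ m
      · rw [ext_id ham hb (by omega)]; omega
      by_cases ham' : a = m + 1
      · subst ham'
        rw [ext_v hb hab]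
        have := hv b hab hb
        omega
      · have hvb := hv b (by omega) hb
        rw [ext_rec hab hb (by omega) hvb.2]
        have := ih (v b) hvb.2 (v a) (hmono a b (by omega) hab hb) (by omega)
        omega
  refine ⟨fun a b hab hb => ⟨(hle b a hab hb).1, (hle b a hab hb).2.trans hb⟩,
    fun a b h => ext_zero h, ?_, ?_⟩
  · intro b hb
    rcases Nat.eq_zero_or_pos b with rfl | hb0
    · exact ext_zero (by omega)
    by_cases hbm : b ≤ m
    · rw [ext_old hb0 hb hbm]; exact hf.2.2.1 b hbm
    · exact ext_id (by omega) hb (by omega)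
  · intro a b c
    induction c using Nat.strong_induction_on generalizing a b with
    | _ c ih =>
      intro hab hbc hc
      by_cases hcm : c ≤ m
      · rw [ext_old hab (by omega) (by omega), ext_old (hab.trans hbc) hc hcm,
          ext_old hbc hc hcm]
        rw [ext_old (hf.mono hab.le hbc hcm) ((hf.le a c).trans hc) ((hf.le a c).trans hcm)]
        exact hf.2.2.2 a b c hab hbc hcm
      by_cases ham : a ≤ m
      · rw [ext_id ham hc (by omega)]
        by_cases hbm : b ≤ m
        · rw [ext_id hbm hc (by omega)]
          exact ext_id ((hle b a hab (by omega)).2.trans hbm) hc (by omega)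
        · rw [ext_id ham (by omega) (by omega)]
      have hvc := hv c (by omega) hc
      have hvb := hv b (by omega) (by omega)
      have hbc' := hmono b c (by omega) hbc hc
      rw [ext_rec hbc hc (by omega) hvc.2]
      by_cases ham' : a = m + 1
      · subst ham'
        rw [ext_v (by omega) (by omega), ext_v (by omega) (by omega)]
      · rw [ext_rec hab (by omega) (by omega) hvb.2,
          ext_rec (hab.trans hbc) hc (by omega) hvc.2]
        exact ih (v c) hvc.2 (v a) (v b) (hmono a b (by omega) hab (by omega)) hbc' (by omega)

theorem eq_ext {g : ℕ → ℕ → ℕ} (hg : DepthAlg N g)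
    (hp : ∀ a, a ≤ m → g a (m + 1) = m + 1) (hmN : m < N)
    (hlt : ∀ b, m + 1 < b → b ≤ N → g (m + 1) b < b)
    (hv : ∀ b, m + 1 < b → b ≤ N → g (m + 1) b = v b)
    (hf : ∀ a b, a < b → b ≤ m → g a b = f a b) : extAlg m N f v = g := by
  funext a b
  induction b using Nat.strong_induction_on generalizing a with
  | _ b ih =>
    by_cases h0 : b ≤ a ∨ N < b
    · rw [ext_zero h0, hg.2.1 a b h0]
    by_cases hbm : b ≤ m
    · rw [ext_old (by omega) (by omega) hbm, hf a b (by omega) hbm]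
    by_cases ham : a ≤ m
    · rw [ext_id ham (by omega) (by omega)]
      exact (hg.fix (p := m + 1) (by omega) (hp a ham) (by omega) (by omega)).symm
    by_cases ham' : a = m + 1
    · subst ham'
      rw [ext_v (by omega) (by omega), hv b (by omega) (by omega)]
    · have hb := hlt b (by omega) (by omega)
      have hvb := hv b (by omega) (by omega)
      rw [ext_rec (by omega) (by omega) (by omega) (by omega), ih (v b) (by omega), ← hvb,
        ← hv a (by omega) (by omega)]
      exact hg.2.2.2 (m + 1) a b (by omega) (by omega) (by omega)

end ext

/-- The increasing enumeration of `V`, shifted. -/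
def vseq {n : ℕ} (V : Finset (Fin n)) (b : ℕ) : ℕ :=
  if h : b - (n - V.card + 2) < V.card then (V.orderEmbOfFin rfl ⟨_, h⟩ : ℕ) + 1 else 0

theorem card_le' {n : ℕ} (V : Finset (Fin n)) : V.card ≤ n := by
  simpa using V.card_le_univ

theorem vseq_mono {n : ℕ} (V : Finset (Fin n)) (b c : ℕ) (hb : n - V.card + 1 < b) (hbc : b < c)
    (hc : c ≤ n + 1) : vseq V b < vseq V c := by
  have := card_le' V
  unfold vseq
  rw [dif_pos (by omega), dif_pos (by omega)]
  have : V.orderEmbOfFin rfl ⟨b - (n - V.card + 2), by omega⟩ <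
      V.orderEmbOfFin rfl ⟨c - (n - V.card + 2), by omega⟩ := by
    rw [OrderEmbedding.lt_iff_lt, Fin.mk_lt_mk]; omega
  have : (V.orderEmbOfFin rfl ⟨b - (n - V.card + 2), by omega⟩ : ℕ) <
      V.orderEmbOfFin rfl ⟨c - (n - V.card + 2), by omega⟩ := this
  omega

theorem vseq_lt {n : ℕ} (V : Finset (Fin n)) (b : ℕ) (hb : n - V.card + 1 < b)
    (hc : b ≤ n + 1) : 0 < vseq V b ∧ vseq V b < b := by
  have hV := card_le' V
  constructor
  · unfold vseq
    rw [dif_pos (by omega)]; omega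
  · have key : ∀ k b, b + k = n + 1 → n - V.card + 1 < b → vseq V b < b := by
      intro k
      induction k with
      | zero =>
        intro b hb hb'
        unfold vseq
        rw [dif_pos (by omega)]
        have := (V.orderEmbOfFin rfl ⟨b - (n - V.card + 2), by omega⟩).2
        omega
      | succ k ih =>
        intro b hb hb'
        have h1 := ih (b + 1) (by omega) (by omega)
        have h2 := vseq_mono V b (b + 1) hb' (by omega) (by omega)
        omega
    exact key (n + 1 - b) b (by omega) hb

theorem mem_iff_vseq {n : ℕ} (V : Finset (Fin n)) (x : Fin n) :
    x ∈ V ↔ ∃ b, n - V.card + 1 < b ∧ b ≤ n + 1 ∧ vseq V b = x + 1 := by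
  have hV := card_le' V
  constructor
  · intro hx
    have : x ∈ Set.range (V.orderEmbOfFin rfl) := by
      rw [Finset.range_orderEmbOfFin]; exact hx
    obtain ⟨i, rfl⟩ := this
    have hi := i.2
    refine ⟨i + (n - V.card + 2), by omega, by omega, ?_⟩
    unfold vseq
    rw [dif_pos (by omega)]
    simp
  · rintro ⟨b, hb, hb', h⟩
    unfold vseq at h
    rw [dif_pos (by omega)] at h
    have : x = V.orderEmbOfFin rfl ⟨b - (n - V.card + 2), by omega⟩ := by
      apply Fin.ext; omega
    rw [this]
    exact Finset.orderEmbOfFin_mem _ _ _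

theorem vseq_unique {n m : ℕ} (hm : m ≤ n) (w : ℕ → ℕ)
    (hw : ∀ b, m + 1 < b → b ≤ n + 1 → 0 < w b ∧ w b < b)
    (hmono : ∀ b c, m + 1 < b → b < c → c ≤ n + 1 → w b < w c) :
    ∃ V : Finset (Fin n), n - V.card = m ∧ ∀ b, m + 1 < b → b ≤ n + 1 → w b = vseq V b := by
  let F : Fin (n - m) → Fin n := fun i => ⟨w (i + (m + 2)) - 1, by
    have := hw (i + (m + 2)) (by omega) (by omega)
    omega⟩
  have hF : StrictMono F := by
    intro i j hij
    have hij' : (i : ℕ) < j := hij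
    have h1 := hmono (i + (m + 2)) (j + (m + 2)) (by omega) (by omega) (by omega)
    have h2 := hw (i + (m + 2)) (by omega) (by omega)
    show w (i + (m + 2)) - 1 < w (j + (m + 2)) - 1
    omega
  have hc : (Finset.univ.image F).card = n - m := by
    rw [Finset.card_image_of_injective _ hF.injective]; simp
  refine ⟨Finset.univ.image F, by omega, ?_⟩
  intro b hb hb'
  have hu := Finset.orderEmbOfFin_unique hc (f := F) (by simp) hF
  unfold vseq
  rw [dif_pos (by omega)]
  have h3 : (Finset.univ.image F).orderEmbOfFin rfl
      ⟨b - (n - (Finset.univ.image F).card + 2), by omega⟩ =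
      (Finset.univ.image F).orderEmbOfFin hc ⟨b - (m + 2), by omega⟩ := by
    rw [Finset.orderEmbOfFin_eq_orderEmbOfFin_iff]
    simp only
    omega
  rw [h3, ← hu]
  have h4 := hw b hb hb'
  have h5 : b - (m + 2) + (m + 2) = b := by omega
  show w b = w (b - (m + 2) + (m + 2)) - 1 + 1
  rw [h5]; omega

/-- Decoding. -/
def decode (n : ℕ) (x : Σ V : Finset (Fin n), {f // DepthAlg (n - V.card) f}) :
    {f // DepthAlg (n + 1) f} :=
  ⟨extAlg (n - x.1.card) (n + 1) x.2.1 (vseq x.1),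
    ext_depthAlg x.2.2 (vseq_lt x.1) (vseq_mono x.1)⟩

theorem decode_card {n : ℕ} {V W : Finset (Fin n)} {f g : ℕ → ℕ → ℕ}
    (h : extAlg (n - V.card) (n + 1) f (vseq V) = extAlg (n - W.card) (n + 1) g (vseq W)) :
    n - V.card ≤ n - W.card := by
  by_contra hcon
  have h1 := congrFun (congrFun h (n - W.card + 1)) (n - V.card + 1)
  rw [ext_id (by omega) (by omega) (by omega), ext_v (by omega) (by omega)] at h1
  have := vseq_lt W (n - V.card + 1) (by omega) (by omega)
  omega

theorem decode_bij (n : ℕ) : Function.Bijective (decode n) := by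
  constructor
  · rintro ⟨V, f, hf⟩ ⟨W, g, hg⟩ h
    have h : extAlg (n - V.card) (n + 1) f (vseq V) = extAlg (n - W.card) (n + 1) g (vseq W) :=
      congrArg Subtype.val h
    have hc : n - V.card = n - W.card := le_antisymm (decode_card h) (decode_card h.symm)
    have hv : ∀ b, n - V.card + 1 < b → b ≤ n + 1 → vseq V b = vseq W b := by
      intro b hb hb'
      have h1 := congrFun (congrFun h (n - V.card + 1)) b
      rw [ext_v hb' hb, hc, ext_v hb' (hc ▸ hb)] at h1
      exact h1
    have hVW : V = W := by
      ext x
      rw [mem_iff_vseq, mem_iff_vseq, ← hc]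
      constructor
      · rintro ⟨b, h1, h2, h3⟩
        exact ⟨b, h1, h2, by rw [← hv b h1 h2, h3]⟩
      · rintro ⟨b, h1, h2, h3⟩
        exact ⟨b, h1, h2, by rw [hv b h1 h2, h3]⟩
    subst hVW
    have hfg : f = g := by
      funext a b
      by_cases hab : b ≤ a ∨ n - V.card < b
      · rw [hf.2.1 a b hab, hg.2.1 a b hab]
      · have h1 := congrFun (congrFun h a) b
        rw [ext_old (by omega) (by omega) (by omega),
          ext_old (by omega) (by omega) (by omega)] at h1
        exact h1
    subst hfg
    rfl
  · rintro ⟨g, hg⟩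
    classical
    let Q : ℕ → Prop := fun p => ∀ c, c < p → g c p = p
    have hQ1 : Q 1 := by
      intro c hc
      obtain rfl : c = 0 := by omega
      exact hg.2.2.1 1 (by omega)
    obtain ⟨m, hm⟩ : ∃ m, Nat.findGreatest Q (n + 1) = m + 1 := by
      have := Nat.le_findGreatest (P := Q) (show 1 ≤ n + 1 by omega) hQ1
      exact ⟨Nat.findGreatest Q (n + 1) - 1, by omega⟩
    have hQm : Q (m + 1) := by
      rw [← hm]; exact Nat.findGreatest_spec (show 1 ≤ n + 1 by omega) hQ1
    have hmn : m ≤ n := by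
      have := Nat.findGreatest_le (P := Q) (n + 1)
      omega
    have hmax : ∀ b, m + 1 < b → b ≤ n + 1 → ¬ Q b := by
      intro b hb hb'
      exact Nat.findGreatest_is_greatest (by omega) hb'
    have hlt : ∀ b, m + 1 < b → b ≤ n + 1 → g (m + 1) b < b := by
      intro b
      induction b using Nat.strong_induction_on with
      | _ b ih =>
        intro hb hb'
        by_contra hcon
        have hpb : g (m + 1) b = b := le_antisymm (hg.le _ _) (not_lt.1 hcon)
        apply hmax b hb hb'
        intro c
        induction c using Nat.strong_induction_on with
        | _ c ihc =>
          intro hc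
          rcases lt_trichotomy c (m + 1) with h | h | h
          · exact hg.fix h (hQm c h) hb.le hb'
          · rw [h, hpb]
          · have h1 := ih c hc h (by omega)
            have h2 := hg.2.2.2 (m + 1) c b h hc hb'
            rw [hpb] at h2
            rw [← h2]
            exact ihc _ h1 (by omega)
    obtain ⟨V, hV, hv⟩ := vseq_unique hmn (g (m + 1))
      (fun b hb hb' => ⟨(hg.1 _ _ hb hb').1, hlt b hb hb'⟩)
      (fun b c hb hbc hc => hg.mono hb.le hbc hc)
    have hf : DepthAlg m (fun a b => if b ≤ m then g a b else 0) := by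
      refine ⟨?_, ?_, ?_, ?_⟩
      · intro a b hab hb
        simp only [if_pos hb]
        have := hg.1 a b hab (by omega)
        have := hg.le a b
        omega
      · intro a b h
        by_cases hb : b ≤ m
        · simp only [if_pos hb]; exact hg.2.1 a b (by omega)
        · simp only [if_neg hb]
      · intro b hb
        simp only [if_pos hb]; exact hg.2.2.1 b (by omega)
      · intro a b c hab hbc hc
        have := hg.le a c
        simp only [if_pos hc, if_pos (hbc.le.trans hc), if_pos (this.trans hc)]
        exact hg.2.2.2 a b c hab hbc (by omega)
    refine ⟨⟨V, _, by rw [hV]; exact hf⟩, ?_⟩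
    apply Subtype.ext
    show extAlg (n - V.card) (n + 1) (fun a b => if b ≤ m then g a b else 0) (vseq V) = g
    rw [hV]
    apply eq_ext hg (fun a ha => hQm a (by omega)) (by omega) hlt hv
    intro a b hab hb
    simp only [if_pos hb]

/-- The block of `none` and the rest. -/
def optSetoid {α : Type} [DecidableEq α] (x : Σ V : Finset α, Setoid {a // a ∉ V}) :
    Setoid (Option α) :=
  Setoid.ker (fun o : Option α => match o with
    | none => (none : Option (Quotient x.2))
    | some a => if h : a ∈ x.1 then none else some (Quotient.mk x.2 ⟨a, h⟩))

theorem optSetoid_none {α : Type} [DecidableEq α] (x : Σ V : Finset α, Setoid {a // a ∉ V})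
    (a : α) : (optSetoid x) none (some a) ↔ a ∈ x.1 := by
  rw [optSetoid, Setoid.ker_def]
  by_cases h : a ∈ x.1 <;> simp [h]

theorem optSetoid_some {α : Type} [DecidableEq α] (x : Σ V : Finset α, Setoid {a // a ∉ V})
    (a b : {a // a ∉ x.1}) : (optSetoid x) (some a.1) (some b.1) ↔ x.2 a b := by
  rw [optSetoid, Setoid.ker_def]
  simp only [dif_neg a.2, dif_neg b.2, Option.some.injEq]
  exact Quotient.eq

theorem optSetoid_bij {α : Type} [DecidableEq α] [Fintype α] :
    Function.Bijective (optSetoid (α := α)) := by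
  classical
  constructor
  · rintro ⟨V, s⟩ ⟨W, t⟩ h
    have hVW : V = W := by
      ext a
      rw [← optSetoid_none ⟨V, s⟩ a, h, optSetoid_none]
    subst hVW
    have : s = t := by
      ext a b
      rw [← optSetoid_some ⟨V, s⟩ a b, h]
      exact optSetoid_some ⟨V, t⟩ a b
    rw [this]
  · intro r
    refine ⟨⟨Finset.univ.filter (fun a => r none (some a)),
      Setoid.comap (fun a => some a.1) r⟩, ?_⟩
    set x : Σ V : Finset α, Setoid {a // a ∉ V} := ⟨Finset.univ.filter (fun a => r none (some a)),
      Setoid.comap (fun a => some a.1) r⟩ with hx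
    have hmem : ∀ a, a ∈ x.1 ↔ r none (some a) := by intro a; simp [hx]
    have hn : ∀ a, (optSetoid x) none (some a) ↔ r none (some a) := by
      intro a; rw [optSetoid_none, hmem]
    ext o o'
    rcases o with _ | a <;> rcases o' with _ | b
    · exact ⟨fun _ => r.refl _, fun _ => (optSetoid x).refl _⟩
    · exact hn b
    · rw [Setoid.comm', hn a, Setoid.comm']
    · by_cases ha : a ∈ x.1
      · have h1 := (optSetoid_none x a).2 ha
        have h2 := (hmem a).1 ha
        constructor
        · intro h
          exact r.trans (r.symm h2) ((hn b).1 ((optSetoid x).trans h1 h))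
        · intro h
          exact (optSetoid x).trans ((optSetoid x).symm h1) ((hn b).2 (r.trans h2 h))
      · by_cases hb : b ∈ x.1
        · have h1 := (optSetoid_none x b).2 hb
          have h2 := (hmem b).1 hb
          constructor
          · intro h
            exact r.trans (r.symm ((hn a).1 ((optSetoid x).trans h1 ((optSetoid x).symm h)))) h2
          · intro h
            exact absurd ((hmem a).2 (r.trans h2 (r.symm h))) ha
        · exact optSetoid_some x ⟨a, ha⟩ ⟨b, hb⟩

theorem setoid_congr {α β : Type} (e : α ≃ β) : Nonempty (Setoid α ≃ Setoid β) := by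
  refine ⟨⟨fun s => Setoid.comap e.symm s, fun s => Setoid.comap e s, ?_, ?_⟩⟩
  · intro s; ext a b; simp [Setoid.comap_rel]
  · intro s; ext a b; simp [Setoid.comap_rel]

theorem depthAlg_equiv (n : ℕ) : Nonempty ({f // DepthAlg n f} ≃ Setoid (Fin n)) := by
  induction n using Nat.strong_induction_on with
  | _ n ih =>
    rcases n with _ | n
    · have h0 : DepthAlg 0 (fun _ _ => 0) := by
        refine ⟨?_, ?_, ?_, ?_⟩ <;> intros <;> (try simp only) <;> omega
      have : Unique {f // DepthAlg 0 f} := by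
        refine ⟨⟨⟨_, h0⟩⟩, ?_⟩
        rintro ⟨f, hf⟩
        apply Subtype.ext
        funext a b
        exact hf.2.1 a b (by omega)
      have : Unique (Setoid (Fin 0)) := by
        refine ⟨⟨⊥⟩, ?_⟩
        intro s
        ext a
        exact a.elim0
      exact ⟨Equiv.ofUnique _ _⟩
    · have h1 : ∀ V : Finset (Fin n),
          Nonempty ({f // DepthAlg (n - V.card) f} ≃ Setoid {a // a ∉ V}) := by
        intro V
        obtain ⟨e1⟩ := ih (n - V.card) (by omega)
        have hc : Fintype.card {a // a ∉ V} = n - V.card := by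
          rw [Fintype.card_subtype_compl]; simp
        obtain ⟨e2⟩ := setoid_congr (Fintype.equivFinOfCardEq hc).symm
        exact ⟨e1.trans e2⟩
      have E := fun V => (h1 V).some
      obtain ⟨e3⟩ := setoid_congr (finSuccEquiv n).symm
      exact ⟨(Equiv.ofBijective _ (decode_bij n)).symm.trans ((Equiv.sigmaCongrRight E).trans
        ((Equiv.ofBijective _ optSetoid_bij).trans e3))⟩

theorem DepthAlg.cycl {n f} (h : DepthAlg n f) (x y z : ℕ) (hx : x ≤ n) (hy : y ≤ n)
    (hz : z ≤ n) : f (f x y) (f x z) = f (f y x) (f y z) := by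
  wlog hxy : x ≤ y generalizing x y
  · exact (this y x hy hx (by omega)).symm
  rw [h.2.1 y x (Or.inl hxy), h.2.2.1 _ (h.le_n _ _)]
  rcases hxy.eq_or_lt with rfl | hxy
  · rw [h.2.1 x x (Or.inl le_rfl), h.2.2.1 _ (h.le_n _ _)]
  · by_cases hyz : y < z
    · exact h.2.2.2 x y z hxy hyz hz
    · rw [h.2.1 y z (by omega)]
      apply h.2.1
      left
      by_cases hxz : x < z
      · rcases (not_lt.1 hyz).eq_or_lt with rfl | h'
        · exact le_rfl
        · exact (h.mono hxz.le h' hy).le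
      · rw [h.2.1 x z (by omega)]; omega

/-- From depth-coded functions to operations. -/
def toOp (n : ℕ) (f : {f // DepthAlg n f}) (x y : Fin (n + 1)) : Fin (n + 1) :=
  Fin.rev ⟨f.1 x.rev y.rev, Nat.lt_succ_of_le (f.2.le_n _ _)⟩

theorem rev_toOp (n : ℕ) (f : {f // DepthAlg n f}) (x y : Fin (n + 1)) :
    ((toOp n f x y).rev : ℕ) = f.1 x.rev y.rev := by
  simp [toOp]

theorem rev_inj' {n : ℕ} {x y : Fin (n + 1)} : (x.rev : ℕ) = y.rev ↔ x = y := by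
  rw [Fin.val_inj, Fin.rev_inj]

theorem rev_le' {n : ℕ} (x : Fin (n + 1)) : (x.rev : ℕ) ≤ n := by omega

theorem toOp_spec (n : ℕ) (f : {f // DepthAlg n f}) : IsLAlgebra (toOp n f) (Fin.last n) ∧
    ∀ x y, (toOp n f x y = Fin.last n ↔ x ≤ y) := by
  have hord : ∀ x y, (toOp n f x y = Fin.last n ↔ x ≤ y) := by
    intro x y
    rw [← rev_inj', rev_toOp, ← Fin.rev_le_rev]
    simp only [Fin.rev_last, Fin.val_zero]
    constructor
    · intro h
      by_contra hcon
      have := (f.2.1 x.rev y.rev (not_le.1 hcon) (rev_le' y)).1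
      omega
    · intro h
      exact f.2.2.1 _ _ (Or.inl h)
  refine ⟨⟨?_, ?_, ?_, ?_, ?_⟩, hord⟩
  · intro x
    rw [← rev_inj', rev_toOp]
    simp only [Fin.rev_last, Fin.val_zero]
    exact f.2.2.2.1 _ (rev_le' x)
  · intro x; rw [hord]; exact Fin.le_last x
  · intro x; rw [hord]
  · intro x y z
    rw [← rev_inj']
    simp only [rev_toOp]
    exact f.2.cycl _ _ _ (rev_le' _) (rev_le' _) (rev_le' _)
  · intro x y h1 h2
    rw [hord] at h1 h2
    exact le_antisymm h1 h2

theorem toOp_bij (n : ℕ) : Function.Bijective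
    (fun f : {f // DepthAlg n f} => (⟨toOp n f, toOp_spec n f⟩ :
      {op : Fin (n + 1) → Fin (n + 1) → Fin (n + 1) //
      IsLAlgebra op (Fin.last n) ∧ ∀ x y, (op x y = Fin.last n ↔ x ≤ y)})) := by
  constructor
  · intro f g h
    have h : toOp n f = toOp n g := congrArg Subtype.val h
    apply Subtype.ext
    funext a b
    by_cases hab : b ≤ a ∨ n < b
    · rw [f.2.2.1 a b hab, g.2.2.1 a b hab]
    · have h1 := rev_toOp n f (Fin.rev ⟨a, by omega⟩) (Fin.rev ⟨b, by omega⟩)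
      rw [h, rev_toOp] at h1
      simpa using h1.symm
  · rintro ⟨op, ⟨h1, h2, h3, h4, h5⟩, hord⟩
    let F : ℕ → ℕ → ℕ := fun a b => if h : a < b ∧ b ≤ n then
      ((op (Fin.rev ⟨a, by omega⟩) (Fin.rev ⟨b, by omega⟩)).rev : ℕ) else 0
    have hFop : ∀ x y : Fin (n + 1), F x.rev y.rev = (op x y).rev := by
      intro x y
      by_cases h : (x.rev : ℕ) < y.rev ∧ (y.rev : ℕ) ≤ n
      · simp only [F, dif_pos h, Fin.eta, Fin.rev_rev]
      · simp only [F, dif_neg h]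
        have hle : x ≤ y := by
          rw [← Fin.rev_le_rev]
          have := rev_le' y
          show (y.rev : ℕ) ≤ x.rev
          omega
        rw [(hord x y).2 hle]; simp
    have hlift : ∀ a, a ≤ n → ∃ x : Fin (n + 1), (x.rev : ℕ) = a := by
      intro a ha
      exact ⟨Fin.rev ⟨a, by omega⟩, by simp⟩
    have hF : DepthAlg n F := by
      refine ⟨?_, ?_, ?_, ?_⟩
      · intro a b hab hb
        obtain ⟨x, rfl⟩ := hlift a (by omega)
        obtain ⟨y, rfl⟩ := hlift b hb
        rw [hFop]
        refine ⟨?_, rev_le' _⟩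
        by_contra hcon
        have h0 : op x y = Fin.last n := by
          rw [← rev_inj']; simp only [Fin.rev_last, Fin.val_zero]; omega
        rw [hord, ← Fin.rev_le_rev] at h0
        have h0 : (y.rev : ℕ) ≤ x.rev := h0
        omega
      · intro a b h
        simp only [F]
        rw [dif_neg (by omega)]
      · intro b hb
        obtain ⟨y, rfl⟩ := hlift b hb
        have := hFop (Fin.last n) y
        rw [h1] at this
        simpa using this
      · intro a b c hab hbc hc
        obtain ⟨x, rfl⟩ := hlift a (by omega)
        obtain ⟨y, rfl⟩ := hlift b (by omega)
        obtain ⟨z, rfl⟩ := hlift c hc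
        rw [hFop, hFop, hFop, hFop, h4 x y z]
        have hyx : op y x = Fin.last n := by
          rw [hord, ← Fin.rev_le_rev]
          exact hab.le
        rw [hyx, h1]
    refine ⟨⟨F, hF⟩, ?_⟩
    apply Subtype.ext
    funext x y
    show toOp n ⟨F, hF⟩ x y = op x y
    rw [← rev_inj', rev_toOp]
    exact hFop x y

/-- For every `n ≥ 1` (here: sets of size `n + 1`), the number of binary operations on
`Fin (n+1)` making it an L-algebra with logical unit the largest element and whose natural
order (`x ≤ y` iff `x·y = e`) coincides with the standard linear order equals the Bell
number `B(n)`, i.e. the number of equivalence relations (`Setoid`s) on a set with `n`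
elements. -/
theorem num_linear_L_algebras_eq_bell (n : ℕ) :
    Nat.card {op : Fin (n + 1) → Fin (n + 1) → Fin (n + 1) //
      IsLAlgebra op (Fin.last n) ∧ ∀ x y, (op x y = Fin.last n ↔ x ≤ y)} =
    Nat.card (Setoid (Fin n)) := by
  obtain ⟨e⟩ := depthAlg_equiv n
  exact Nat.card_congr ((Equiv.ofBijective _ (toOp_bij n)).symm.trans e)
end

section
/- Every finite regular L-algebra X is isomorphic, as an L-algebra, to a finite nonempty upwards-closed subset Y of the negative cone of ℤ^m (with componentwise order, for some m ∈ ℕ) equipped with the operation a·b = 0 ⊓ (b − a); here Y being upwards-closed means that y ∈ Y, z ≤ 0 and z ≥ y imply z ∈ Y, and such Y is closed under the operation a·b = 0 ⊓ (b − a). -/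
def LCoatom {X : Type*} (op : X → X → X) (e : X) (p : X) : Prop :=
  p ≠ e ∧ ∀ z, op p z = e → z = p ∨ z = e

theorem lalg_trans {X : Type*} {op : X → X → X} {e : X} (hL : IsLAlgebra op e)
    {x y z : X} (h1 : op x y = e) (h2 : op y z = e) : op x z = e := by
  obtain ⟨h_e, he, hx, hc, ha⟩ := hL
  have := hc x y z
  rwa [h1, h2, h_e, he] at this

theorem lalg_mono {X : Type*} {op : X → X → X} {e : X} (hL : IsLAlgebra op e)
    (x : X) {y z : X} (h1 : op y z = e) : op (op x y) (op x z) = e := by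
  obtain ⟨h_e, he, hx, hc, ha⟩ := hL
  rw [hc, h1, he]

theorem lalg_inj {X : Type*} {op : X → X → X} {e : X} (hL : IsLAlgebra op e)
    {q y z : X} (hy : op y q = e) (hz : op z q = e) (h : op q y = op q z) : y = z := by
  obtain ⟨h_e, he, hx, hc, ha⟩ := hL
  apply ha
  · have := hc q y z
    rw [hy, h_e, h, hx] at this
    exact this.symm
  · have := hc q z y
    rw [hz, h_e, h, hx] at this
    exact this.symm

theorem lalg_kl {X : Type*} {op : X → X → X} {e : X} (hL : IsLAlgebra op e)
    (hsemireg : ∀ x y z, op (op (op x y) z) (op (op y x) z) = op (op (op x y) z) z)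
    (x z : X) : op z (op x z) = e := by
  obtain ⟨h_e, he, hx, hc, ha⟩ := hL
  have := hsemireg x e z
  rwa [he, h_e, h_e, hx] at this

theorem lalg_strict {X : Type*} [Finite X] {op : X → X → X} {e : X} (hL : IsLAlgebra op e)
    (hkl : ∀ x z, op z (op x z) = e)
    (hreg : ∀ x y, op x y = e → ∃ z, op x z = e ∧ op z x = y)
    {x q : X} (hxq : op x q = e) (h : op q x = x) : q = e := by
  let φ : {z // op x z = e} → {z // op x z = e} := fun z => ⟨op z.1 x, hkl _ _⟩
  have hs : Function.Surjective φ := by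
    rintro ⟨y, hy⟩
    obtain ⟨z, hz, hzy⟩ := hreg x y hy
    exact ⟨⟨z, hz⟩, Subtype.ext hzy⟩
  have hi := Finite.injective_iff_surjective.2 hs
  have := @hi ⟨q, hxq⟩ ⟨e, hL.2.1 x⟩ (Subtype.ext (by simp [φ, h, hL.1]))
  exact congrArg Subtype.val this

theorem lalg_ind {X : Type*} [Finite X] {op : X → X → X} {e : X} (hL : IsLAlgebra op e)
    (hkl : ∀ x z, op z (op x z) = e)
    (hreg : ∀ x y, op x y = e → ∃ z, op x z = e ∧ op z x = y)
    (P : X → Prop) (h0 : P e)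
    (h1 : ∀ x p, LCoatom op e p → op x p = e → P (op p x) → P x) (x : X) : P x := by
  letI : PartialOrder X :=
    { le := fun x y => op x y = e
      le_refl := hL.2.2.1
      le_trans := fun _ _ _ => lalg_trans hL
      le_antisymm := hL.2.2.2.2 }
  have hle : ∀ x y : X, x ≤ y ↔ op x y = e := fun _ _ => Iff.rfl
  induction x using (wellFounded_gt (α := X)).induction with
  | _ x ih =>
  by_cases hx : x = e
  · rwa [hx]
  obtain ⟨p, hxp, hp⟩ := (Set.toFinite {y : X | y ≠ e}).exists_le_maximal (a := x) hx
  have hpc : LCoatom op e p := by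
    refine ⟨hp.1, fun z hz => ?_⟩
    by_cases hze : z = e
    · exact Or.inr hze
    · exact Or.inl (le_antisymm (hp.2 hze hz) hz)
  refine h1 x p hpc hxp (ih _ ?_)
  refine lt_of_le_of_ne (hkl p x) fun h => hp.1 (lalg_strict hL hkl hreg hxp h.symm)

theorem lcoatom_op {X : Type*} {op : X → X → X} {e : X} (hL : IsLAlgebra op e)
    (hkl : ∀ x z, op z (op x z) = e) {p q : X} (hp : LCoatom op e p) (hq : LCoatom op e q)
    (h : p ≠ q) : op p q = q := by
  rcases hq.2 _ (hkl p q) with h' | h'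
  · exact h'
  · rcases hp.2 _ h' with h'' | h''
    · exact absurd h''.symm h
    · exact absurd h'' hq.1

theorem lcoatom_le_iff {X : Type*} {op : X → X → X} {e : X} (hL : IsLAlgebra op e)
    (hkl : ∀ x z, op z (op x z) = e) {p q : X} (hp : LCoatom op e p) (hq : LCoatom op e q)
    (h : p ≠ q) (x : X) : op (op q x) p = e ↔ op x p = e := by
  constructor
  · exact lalg_trans hL (hkl q x)
  · intro h'
    have := lalg_mono hL q h'
    rwa [lcoatom_op hL hkl hq hp h.symm] at this

theorem lcoatom_comm {X : Type*} {op : X → X → X} {e : X} (hL : IsLAlgebra op e)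
    (hkl : ∀ x z, op z (op x z) = e) {p q : X} (hp : LCoatom op e p) (hq : LCoatom op e q)
    (x : X) : op p (op q x) = op q (op p x) := by
  by_cases h : p = q
  · rw [h]
  have := hL.2.2.2.1 p q x
  rw [lcoatom_op hL hkl hp hq h, lcoatom_op hL hkl hq hp (Ne.symm h)] at this
  exact this.symm

theorem lcoatom_fix {X : Type*} [Finite X] {op : X → X → X} {e : X} (hL : IsLAlgebra op e)
    (hkl : ∀ x z, op z (op x z) = e)
    (hreg : ∀ x y, op x y = e → ∃ z, op x z = e ∧ op z x = y)
    {p : X} (hp : LCoatom op e p) (x : X) : op x p ≠ e → op p x = x := by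
  refine lalg_ind hL hkl hreg (fun x => op x p ≠ e → op p x = x) (fun _ => hL.2.1 p) ?_ x
  intro x q hq hxq ih hxp
  have hpq : p ≠ q := by rintro rfl; exact hxp hxq
  have h1 := ih (fun h => hxp ((lcoatom_le_iff hL hkl hp hq hpq x).1 h))
  rw [lcoatom_comm hL hkl hp hq] at h1
  exact lalg_inj hL ((lcoatom_le_iff hL hkl hq hp hpq.symm x).2 hxq) hxq h1

theorem lcoatom_mult {X : Type*} [Finite X] {op : X → X → X} {e : X} (hL : IsLAlgebra op e)
    (hkl : ∀ x z, op z (op x z) = e)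
    (hreg : ∀ x y, op x y = e → ∃ z, op x z = e ∧ op z x = y)
    (p : X) (hp : LCoatom op e p) : ∃ μ : X → ℕ,
      (∀ x, op x p ≠ e → μ x = 0) ∧ (∀ x, op x p = e → μ x = μ (op p x) + 1) ∧
      (∀ q x, LCoatom op e q → q ≠ p → μ (op q x) = μ x) := by
  classical
  have hex : ∀ x, ∃ n, op ((op p)^[n] x) p ≠ e := by
    intro x
    refine lalg_ind hL hkl hreg (fun x => ∃ n, op ((op p)^[n] x) p ≠ e)
      ⟨0, by simpa [hL.1] using hp.1⟩ ?_ x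
    rintro x q hq hxq ⟨n, hn⟩
    by_cases hpq : p = q
    · subst hpq
      exact ⟨n + 1, hn⟩
    · refine ⟨n, fun h => hn ?_⟩
      have hc : Function.Commute (op p) (op q) := lcoatom_comm hL hkl hp hq
      rw [(hc.iterate_left n).eq x, lcoatom_le_iff hL hkl hp hq hpq]
      exact h
  refine ⟨fun x => Nat.find (hex x), ?_, ?_, ?_⟩
  · intro x hx
    simpa using hx
  · intro x hx
    exact Nat.find_comp_succ (hex x) (hex (op p x)) (by simpa using hx)
  · intro q x hq hqp
    have hc : Function.Commute (op p) (op q) := lcoatom_comm hL hkl hp hq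
    have : ∀ n, op ((op p)^[n] (op q x)) p ≠ e ↔ op ((op p)^[n] x) p ≠ e := by
      intro n
      rw [(hc.iterate_left n).eq x, Ne, lcoatom_le_iff hL hkl hp hq hqp.symm]
    exact Nat.find_congr' (this _)

/-- Every finite regular L-algebra is isomorphic, as an L-algebra, to a finite nonempty
upwards-closed subset `Y` of the negative cone of `ℤ^m` (componentwise order, for some
`m ∈ ℕ`) equipped with the operation `a·b = 0 ⊓ (b - a)`; such a `Y` is closed under
this operation. -/
theorem finite_regular_L_algebra_iso_young_diagram
    {X : Type*} [Fintype X] (op : X → X → X) (e : X)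
    (hL : IsLAlgebra op e)
    (hsemireg : ∀ x y z, op (op (op x y) z) (op (op y x) z) = op (op (op x y) z) z)
    (hreg : ∀ x y, op x y = e → ∃ z, op x z = e ∧ op z x = y) :
    ∃ (m : ℕ) (Y : Set (Fin m → ℤ)),
      Y.Nonempty ∧ Y.Finite ∧
      (∀ y ∈ Y, y ≤ 0) ∧
      (∀ y ∈ Y, ∀ z : Fin m → ℤ, z ≤ 0 → y ≤ z → z ∈ Y) ∧
      (∀ a ∈ Y, ∀ b ∈ Y, (0 ⊓ (b - a) : Fin m → ℤ) ∈ Y) ∧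
      ∃ f : X ≃ Y,
        ∀ x y : X, (f (op x y) : Fin m → ℤ) = 0 ⊓ ((f y : Fin m → ℤ) - (f x : Fin m → ℤ)) := by
  classical
  have hkl := lalg_kl hL hsemireg
  let C := {p : X // LCoatom op e p}
  let c : Fin (Fintype.card C) ≃ C := (Fintype.equivFin C).symm
  choose μ hμ0 hμ1 hμ2 using fun i => lcoatom_mult hL hkl hreg (c i).1 (c i).2
  have hcs : ∀ p, LCoatom op e p → ∃ i, (c i).1 = p := fun p hp =>
    ⟨c.symm ⟨p, hp⟩, by simp⟩
  have hcinj : ∀ i j, i ≠ j → (c i).1 ≠ (c j).1 := fun i j h h' =>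
    h (c.injective (Subtype.ext h'))
  have hfix := fun i => lcoatom_fix hL hkl hreg (c i).2
  have hTs : ∀ i x, μ i (op (c i).1 x) = μ i x - 1 := by
    intro i x
    by_cases h : op x (c i).1 = e
    · rw [hμ1 i x h]; simp
    · rw [hfix i x h, hμ0 i x h]
  have hTo : ∀ i j x, i ≠ j → μ i (op (c j).1 x) = μ i x := fun i j x h =>
    hμ2 i _ x (c j).2 (hcinj j i h.symm)
  have hpos : ∀ i x, 0 < μ i x ↔ op x (c i).1 = e := by
    intro i x
    constructor
    · intro h
      by_contra h'
      rw [hμ0 i x h'] at h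
      exact absurd h (lt_irrefl _)
    · intro h
      rw [hμ1 i x h]; omega
  have hμe : ∀ i, μ i e = 0 := fun i => hμ0 i e (by rw [hL.1]; exact (c i).2.1)
  have hinj : ∀ x y, (∀ i, μ i x = μ i y) → x = y := by
    intro x
    refine lalg_ind hL hkl hreg (fun x => ∀ y, (∀ i, μ i x = μ i y) → x = y) ?_ ?_ x
    · intro y hy
      refine lalg_ind hL hkl hreg (fun y => (∀ i, μ i e = μ i y) → e = y) (fun _ => rfl) ?_ y hy
      intro y p hp hyp _ h
      obtain ⟨i, rfl⟩ := hcs p hp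
      have := (hpos i y).2 hyp
      rw [← h, hμe] at this
      exact absurd this (lt_irrefl _)
    · intro x p hp hxp ih y h
      obtain ⟨i, rfl⟩ := hcs p hp
      have hyp : op y (c i).1 = e := by rw [← hpos, ← h, hpos]; exact hxp
      refine lalg_inj hL hxp hyp (ih _ fun j => ?_)
      by_cases hj : j = i
      · subst hj; rw [hTs, hTs, h]
      · rw [hTo _ _ _ hj, hTo _ _ _ hj, h]
  have hop : ∀ x y i, μ i (op x y) = μ i y - μ i x := by
    intro x
    refine lalg_ind hL hkl hreg (fun x => ∀ y i, μ i (op x y) = μ i y - μ i x) ?_ ?_ x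
    · intro y i
      rw [hL.1, hμe, Nat.sub_zero]
    · intro x p hp hxp ih y j
      obtain ⟨i, rfl⟩ := hcs p hp
      have h := hL.2.2.2.1 (c i).1 x y
      rw [hxp, hL.1] at h
      rw [← h, ih]
      by_cases hj : j = i
      · subst hj
        rw [hTs, hTs]
        have := (hpos j x).2 hxp
        omega
      · rw [hTo _ _ _ hj, hTo _ _ _ hj]
  have hup : ∀ x (v : Fin (Fintype.card C) → ℕ), (∀ i, v i ≤ μ i x) → ∃ y, ∀ i, μ i y = v i := by
    intro x v
    induction hn : ∑ i, (μ i x - v i) using Nat.strong_induction_on generalizing x with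
    | _ n ih =>
    intro hv
    by_cases hx : ∀ i, μ i x = v i
    · exact ⟨x, hx⟩
    push Not at hx
    obtain ⟨i, hi⟩ := hx
    have hvi := hv i
    have hle : ∀ j, μ j (op (c i).1 x) ≤ μ j x ∧ v j ≤ μ j (op (c i).1 x) := by
      intro j
      have := hv j
      by_cases hj : j = i
      · subst hj; rw [hTs]; omega
      · rw [hTo _ _ _ hj]; omega
    refine ih _ ?_ (op (c i).1 x) rfl (fun j => (hle j).2)
    rw [← hn]
    refine Finset.sum_lt_sum (fun j _ => ?_) ⟨i, Finset.mem_univ i, ?_⟩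
    · have := hle j; omega
    · rw [hTs]; omega
  let f : X → Fin (Fintype.card C) → ℤ := fun x i => -(μ i x : ℤ)
  have hfinj : Function.Injective f := by
    intro x y h
    refine hinj x y fun i => ?_
    have := congrFun h i
    simpa [f] using this
  have hfop : ∀ x y, f (op x y) = 0 ⊓ (f y - f x) := by
    intro x y
    funext i
    simp only [f, hop, Pi.inf_apply, Pi.sub_apply, Pi.zero_apply]
    omega
  refine ⟨Fintype.card C, Set.range f, ⟨f e, e, rfl⟩, Set.finite_range f, ?_, ?_, ?_,
    Equiv.ofInjective f hfinj, fun x y => by simpa using hfop x y⟩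
  · rintro _ ⟨x, rfl⟩ i
    simp [f]
  · rintro _ ⟨x, rfl⟩ z hz hxz
    obtain ⟨y, hy⟩ := hup x (fun i => (-(z i)).toNat) (fun i => by
      have h1 := hxz i
      have h2 := hz i
      simp only [f, Pi.zero_apply] at h1 h2
      omega)
    refine ⟨y, ?_⟩
    funext i
    have h2 := hz i
    simp only [Pi.zero_apply] at h2
    simp only [f, hy]
    omega
  · rintro _ ⟨x, rfl⟩ _ ⟨y, rfl⟩
    exact ⟨op x y, hfop x y⟩
end

section
/- Let X be a finite linear L-algebra (an L-algebra whose natural order x ≤ y ⟺ x·y = e is total). If x, y, z ∈ X satisfy x ≥ y > z, then x·y > x·z. -/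
/-- In a finite linear L-algebra (natural order `x ≤ y ⟺ x·y = e` is total),
if `x ≥ y > z` then `x·y > x·z`. -/
theorem linear_L_algebra_strict_mono
    {X : Type*} [Fintype X] (op : X → X → X) (e : X)
    (hL : IsLAlgebra op e)
    (htotal : ∀ x y, op x y = e ∨ op y x = e)
    (x y z : X)
    (hyx : op y x = e)            -- y ≤ x
    (hzy : op z y = e) (hzy' : z ≠ y)  -- z < y
    : op (op x z) (op x y) = e ∧ op x z ≠ op x y := by
  obtain ⟨h1, h2, h3, h4, h5⟩ := hL
  refine ⟨?_, fun h => hzy' (h5 z y hzy ?_)⟩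
  · rw [h4 x z y, hzy, h2]
  · have h6 := h4 x y z
    rw [h, h3, hyx, h1] at h6
    exact h6.symm
end

section
/- Let X be a finite linear L-algebra (an L-algebra whose natural order x ≤ y ⟺ x·y = e is total). If x ≤ y, then x·z ≥ y·z for all z ∈ X. -/
/-- In a finite linear L-algebra (natural order `x ≤ y ⟺ x·y = e` is total),
if `x ≤ y` then `x·z ≥ y·z` for all `z`. -/
theorem linear_L_algebra_antitone
    {X : Type*} [Fintype X] (op : X → X → X) (e : X)
    (hL : IsLAlgebra op e)
    (htotal : ∀ x y, op x y = e ∨ op y x = e)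
    (x y : X) (hxy : op x y = e) :   -- x ≤ y
    ∀ z : X, op (op y z) (op x z) = e := by
  obtain ⟨h1, h2, h3, h4, h5⟩ := hL
  have tr : ∀ a b c, op a b = e → op b c = e → op a c = e := by
    intro a b c hab hbc
    have h := h4 a b c
    rw [hab, hbc, h1, h2] at h
    exact h
  have mono : ∀ b u v, op u v = e → op (op b u) (op b v) = e := by
    intro b u v huv
    rw [h4, huv, h2]
  have inj : ∀ b u v, op u v = e → op v b = e → op b u = op b v → u = v := by
    intro b u v huv hvb he
    have h := h4 b v u
    rw [he, h3, hvb, h1] at h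
    exact h5 u v huv h.symm
  let r : X → X → Prop := fun a b => op a b = e ∧ a ≠ b
  haveI : IsTrans X r := ⟨by
    rintro a b c ⟨hab, nab⟩ ⟨hbc, nbc⟩
    refine ⟨tr a b c hab hbc, ?_⟩
    rintro rfl
    exact nab (h5 _ _ hab hbc)⟩
  haveI : Std.Irrefl r := ⟨fun a h => h.2 rfl⟩
  have wf : WellFounded r := Finite.wellFounded_of_trans_of_irrefl r
  have key : ∀ b a, op a b = e → ¬ r (op b a) a := by
    intro b a
    induction a using wf.induction with
    | _ a ih =>
      intro hab hr
      refine ih (op b a) hr (tr _ _ _ hr.1 hab) ⟨mono b _ _ hr.1, ?_⟩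
      intro he
      exact hr.2 (inj b _ _ hr.1 hab he)
  have K : ∀ b a, op a (op b a) = e := by
    intro b a
    rcases htotal b a with h | h
    · rw [h, h2]
    · rcases htotal a (op b a) with h' | h'
      · exact h'
      · by_contra hne
        refine key b a h ⟨h', ?_⟩
        intro he
        rw [he, h3] at hne
        exact hne rfl
  intro z
  have h := h4 x y z
  rw [hxy, h1] at h
  rw [h]
  exact K _ _
end

section
/- Let X be a finite linear L-algebra (an L-algebra whose natural order x ≤ y ⟺ x·y = e is total). If p ≠ e is the smallest invariant element of X (i.e. p is invariant, and no invariant element is strictly smaller than p), then p·x > x for all x ≤ p. -/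
/-- An element `x` is invariant if `y·x = x` for all `y > x`
(where `x < y` means `x·y = e` and `x ≠ y`). -/
def LAlgInvariant {X : Type*} (op : X → X → X) (e : X) (x : X) : Prop :=
  ∀ y, op x y = e → y ≠ x → op y x = x

/-- In a finite linear L-algebra (natural order `x ≤ y ⟺ x·y = e` is total),
if `p ≠ e` is the smallest invariant element, then `p·x > x` for all `x ≤ p`. -/
theorem linear_L_algebra_smallest_invariant
    {X : Type*} [Fintype X] (op : X → X → X) (e : X)
    (hL : IsLAlgebra op e)
    (htotal : ∀ x y, op x y = e ∨ op y x = e)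
    (p : X) (hpe : p ≠ e)
    (hp : LAlgInvariant op e p)
    (hmin : ∀ q, LAlgInvariant op e q → ¬ (op q p = e ∧ q ≠ p)) :
    ∀ x, op x p = e → (op x (op p x) = e ∧ op p x ≠ x) := by
  classical
  obtain ⟨h1, h2, h3, h4, h5⟩ := hL
  let _ : LinearOrder X :=
    { le := fun x y => op x y = e
      le_refl := h3
      le_trans := fun x y z hxy hyz => by
        have := h4 x y z
        change op x y = e at hxy
        change op y z = e at hyz
        rw [hxy, hyz, h1, h2] at this
        exact this
      le_antisymm := fun x y => h5 x y
      le_total := htotal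
      toDecidableLE := Classical.decRel _ }
  have hle : ∀ x y : X, x ≤ y ↔ op x y = e := fun _ _ => Iff.rfl
  have key : ∀ x z, x ≤ p → op (op p x) (op p z) = op x z := by
    intro x z hx
    rw [h4 p x z, (hle _ _).1 hx, h1]
  have hmono : ∀ x z, x ≤ p → (op p x ≤ op p z ↔ x ≤ z) := by
    intro x z hx
    rw [hle, hle, key x z hx]
  have hge : ∀ x, x ≤ p → x ≤ op p x := by
    intro x
    induction x using WellFoundedLT.induction with
    | ind x ih =>
      intro hx
      by_contra hc
      have hlt : op p x < x := not_le.1 hc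
      have h6 := ih _ hlt (hlt.le.trans hx)
      exact hc ((hmono x (op p x) hx).1 h6)
  intro x hx
  refine ⟨hge x hx, ?_⟩
  intro hfix
  have hxp : x < p := by
    refine lt_of_le_of_ne hx ?_
    rintro rfl
    rw [h3] at hfix
    exact hpe hfix.symm
  -- the greatest fixed point below p
  obtain ⟨q, ⟨hqp, hqf⟩, hqm⟩ :=
    Set.Finite.exists_maximal (Set.toFinite {q : X | q < p ∧ op p q = q}) ⟨x, hxp, hfix⟩
  refine hmin q ?_ ⟨hqp.le, hqp.ne⟩
  have main : ∀ y, q < y → op y q = q := by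
    intro y
    induction y using WellFoundedGT.induction with
    | ind y ih =>
      intro hqy
      rcases lt_trichotomy y p with hy | rfl | hy
      · have h6 := hge y hy.le
        rcases h6.lt_or_eq with h7 | h7
        · have h8 := ih _ h7 (hqy.trans h7)
          have h9 := key y q hy.le
          rw [hqf, h8] at h9
          exact h9.symm
        · exact absurd (hqm ⟨hy, h7.symm⟩ hqy.le) (not_le.2 hqy)
      · exact hqf
      · have h6 := h4 y p q
        rw [hp y hy.le hy.ne', (hle _ _).1 hy.le, h1, hqf] at h6
        rcases le_total (op y q) p with h7 | h7
        · refine le_antisymm ((hmono _ _ h7).1 ?_) ((hmono _ _ hqp.le).1 ?_)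
          · rw [h6, hqf]
          · rw [h6, hqf]
        · rw [(hle _ _).1 h7] at h6
          have : p ≤ q := by rw [← h6]; exact h2 p
          exact absurd this (not_le.2 hqp)
  intro y hy hne
  exact main y (lt_of_le_of_ne hy hne.symm)
end

section
/- Let X be an L-algebra on the totally ordered set L_n = {x_0 > x_1 > … > x_{n−1}} whose natural order coincides with this total order (so the logical unit is x_0), and let p be the smallest invariant element of X. Extend L_n to the chain L_{n+1} = {x_0 > … > x_{n−1} > x_n} by adding a new least element x_n, and let c ∈ L_{n+1} be any element with p·x_{n−1} > c. Then there exists a unique L-algebra structure on L_{n+1} whose natural order is the total order of L_{n+1}, which restricts to the operation of X on L_n, and which satisfies p·x_n = c. -/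
section LA
variable {n : ℕ} {op : Fin (n + 1) → Fin (n + 1) → Fin (n + 1)}

theorem la_mono (hL : IsLAlgebra op 0) (ho : ∀ a b : Fin (n + 1), op a b = 0 ↔ b.val ≤ a.val)
    (a b b' : Fin (n + 1)) (h : b.val ≤ b'.val) : (op a b).val ≤ (op a b').val := by
  obtain ⟨h1, h2, h3, h4, h5⟩ := hL
  rw [← ho, h4, (ho b' b).2 h, h2]

theorem la_strict (hL : IsLAlgebra op 0) (ho : ∀ a b : Fin (n + 1), op a b = 0 ↔ b.val ≤ a.val)
    (a b b' : Fin (n + 1)) (hab : a.val ≤ b.val) (h : b.val < b'.val) :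
    (op a b).val < (op a b').val := by
  obtain ⟨h1, h2, h3, h4, h5⟩ := hL
  by_contra hc
  have h6 := (ho (op a b) (op a b')).2 (by omega)
  rw [h4, (ho b a).2 hab, h1, ho] at h6
  omega

theorem la_below (hL : IsLAlgebra op 0) (ho : ∀ a b : Fin (n + 1), op a b = 0 ↔ b.val ≤ a.val)
    (a : Fin (n + 1)) : ∀ (k : ℕ) (b : Fin (n + 1)), b.val + k = n → (op a b).val ≤ b.val := by
  intro k
  induction k with
  | zero => intro b hb; have := (op a b).isLt; omega
  | succ k ih =>
    intro b hb
    by_cases hab : a.val ≤ b.val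
    · have h1 := la_strict hL ho a b ⟨b.val + 1, by omega⟩ hab (by simp)
      have h2 := ih ⟨b.val + 1, by omega⟩ (by simp; omega)
      simp only at h2
      omega
    · rw [(ho a b).2 (by omega)]; simp

theorem la_le (hL : IsLAlgebra op 0) (ho : ∀ a b : Fin (n + 1), op a b = 0 ↔ b.val ≤ a.val)
    (a b : Fin (n + 1)) : (op a b).val ≤ b.val :=
  la_below hL ho a (n - b.val) b (by omega)

theorem la_inv (hL : IsLAlgebra op 0) (ho : ∀ a b : Fin (n + 1), op a b = 0 ↔ b.val ≤ a.val)
    (p : Fin (n + 1)) (hp : ∀ y : Fin (n + 1), y.val < p.val → op y p = p)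
    (x y : Fin (n + 1)) (hx : x.val < p.val) (hy : p.val ≤ y.val) : op x y = y := by
  have hle := la_le hL ho x y
  have hm := la_mono hL ho x p y hy
  rw [hp x hx] at hm
  have hst := la_strict hL ho p (op x y) y hm
  obtain ⟨h1, h2, h3, h4, h5⟩ := hL
  have h6 := h4 x p y
  rw [hp x hx, (ho p x).2 hx.le, h1] at h6
  rw [h6] at hst
  apply Fin.ext
  omega

theorem la_dec (hL : IsLAlgebra op 0) (ho : ∀ a b : Fin (n + 1), op a b = 0 ↔ b.val ≤ a.val)
    (p : Fin (n + 1)) (hp : ∀ y : Fin (n + 1), y.val < p.val → op y p = p)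
    (hmin : ∀ q : Fin (n + 1), (∀ y : Fin (n + 1), y.val < q.val → op y q = q) →
      q.val ≤ p.val) :
    ∀ (k : ℕ) (y : Fin (n + 1)), y.val = k → p.val < y.val → (op p y).val < y.val := by
  intro k
  induction k using Nat.strong_induction_on with
  | _ k ih =>
  intro y hk hy
  by_contra hcon
  have hle := la_le hL ho p y
  have hfix : op p y = y := Fin.ext (by omega)
  have key : ∀ (j : ℕ) (x : Fin (n + 1)), x.val = j → x.val < y.val → op x y = y := by
    intro j
    induction j using Nat.strong_induction_on with
    | _ j ihj =>
    intro x hj hx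
    rcases lt_trichotomy x.val p.val with h | h | h
    · exact la_inv hL ho p hp x y h hy.le
    · rw [Fin.ext h, hfix]
    · have hd := ih x.val (by omega) x rfl h
      obtain ⟨h1, h2, h3, h4, h5⟩ := hL
      have h6 := h4 p x y
      rw [hfix, (ho x p).2 h.le, h1] at h6
      rw [← h6]
      exact ihj _ (by omega) _ rfl (by omega)
  have := hmin y (fun x hx => key _ x rfl hx)
  omega

/-- The extension of `op` by the column `F`. -/
def laExt (op : Fin (n + 1) → Fin (n + 1) → Fin (n + 1)) (F : Fin (n + 1) → Fin (n + 2))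
    (a b : Fin (n + 2)) : Fin (n + 2) :=
  Fin.lastCases (motive := fun _ => Fin (n + 2)) 0
    (fun a' => Fin.lastCases (motive := fun _ => Fin (n + 2)) (F a')
      (fun b' => (op a' b').castSucc) b) a

theorem laExt_last (F : Fin (n + 1) → Fin (n + 2)) (b : Fin (n + 2)) :
    laExt op F (Fin.last (n + 1)) b = 0 := by simp [laExt]

theorem laExt_cl (F : Fin (n + 1) → Fin (n + 2)) (a : Fin (n + 1)) :
    laExt op F a.castSucc (Fin.last (n + 1)) = F a := by simp [laExt]

theorem laExt_cc (F : Fin (n + 1) → Fin (n + 2)) (a b : Fin (n + 1)) :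
    laExt op F a.castSucc b.castSucc = (op a b).castSucc := by simp [laExt]

theorem laExt_ord (ho : ∀ a b : Fin (n + 1), op a b = 0 ↔ b.val ≤ a.val)
    (F : Fin (n + 1) → Fin (n + 2)) (hF : ∀ a, F a ≠ 0) (a b : Fin (n + 2)) :
    laExt op F a b = 0 ↔ b.val ≤ a.val := by
  induction a using Fin.lastCases with
  | last => rw [laExt_last]; simp; omega
  | cast a =>
    induction b using Fin.lastCases with
    | last => rw [laExt_cl]; simp [hF]; omega
    | cast b => rw [laExt_cc, Fin.castSucc_eq_zero_iff, ho]; simp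

theorem laExt_isL (hL : IsLAlgebra op 0)
    (ho : ∀ a b : Fin (n + 1), op a b = 0 ↔ b.val ≤ a.val)
    (F : Fin (n + 1) → Fin (n + 2)) (hF : ∀ a, F a ≠ 0) (hF0 : F 0 = Fin.last (n + 1))
    (hFm : ∀ a w, (op a w).val ≤ (F a).val)
    (hFc : ∀ x y : Fin (n + 1), x.val < y.val → laExt op F (op x y).castSucc (F x) = F y) :
    IsLAlgebra (laExt op F) 0 := by
  have hord := laExt_ord ho F hF
  have hz : ∀ x, laExt op F 0 x = x := by
    intro x
    induction x using Fin.lastCases with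
    | last => rw [← Fin.castSucc_zero, laExt_cl, hF0]
    | cast x => rw [← Fin.castSucc_zero, laExt_cc, hL.1]
  have hself : ∀ x, laExt op F x x = 0 := fun x => (hord x x).2 le_rfl
  refine ⟨hz, fun x => (hord x 0).2 (by simp), hself, ?_, ?_⟩
  · have hzc : ∀ y w, laExt op F (laExt op F (Fin.last (n+1)) y) (laExt op F (Fin.last (n+1)) w)
        = laExt op F (laExt op F y (Fin.last (n+1))) (laExt op F y w) := by
      intro y w
      rw [laExt_last, laExt_last, hself]
      induction y using Fin.lastCases with
      | last => rw [laExt_last, laExt_last, hself]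
      | cast y =>
        induction w using Fin.lastCases with
        | last => rw [hself]
        | cast w =>
          symm
          rw [hord, laExt_cc, laExt_cl]
          exact hFm y w
    have hlt : ∀ x y : Fin (n+1), x.val < y.val →
        laExt op F (laExt op F x.castSucc y.castSucc) (laExt op F x.castSucc (Fin.last (n+1)))
        = laExt op F (laExt op F y.castSucc x.castSucc)
          (laExt op F y.castSucc (Fin.last (n+1))) := by
      intro x y hxy
      rw [laExt_cc, laExt_cc, laExt_cl, laExt_cl, (ho y x).2 hxy.le, Fin.castSucc_zero, hz,
        hFc x y hxy]
    intro x y w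
    induction x using Fin.lastCases with
    | last => exact hzc y w
    | cast x =>
      induction y using Fin.lastCases with
      | last => exact (hzc _ w).symm
      | cast y =>
        induction w using Fin.lastCases with
        | cast w => simp only [laExt_cc]; rw [hL.2.2.2.1]
        | last =>
          rcases lt_trichotomy x.val y.val with h | h | h
          · exact hlt x y h
          · rw [Fin.ext h]
          · exact (hlt y x h).symm
  · intro x y h1 h2
    rw [hord] at h1 h2
    exact Fin.ext (by omega)

/-- The column of the extension. -/
def laCol (op : Fin (n + 1) → Fin (n + 1) → Fin (n + 1)) (p : Fin (n + 1)) (c : Fin (n + 2))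
    (y : Fin (n + 1)) : Fin (n + 2) :=
  if y.val < p.val then Fin.last (n + 1) else
    Fin.lastCases (motive := fun _ => Fin (n + 2)) (Fin.last (n + 1))
      (fun c' => (op (op p y) c').castSucc) c

theorem laCol_last (p : Fin (n + 1)) (y : Fin (n + 1)) :
    laCol op p (Fin.last (n + 1)) y = Fin.last (n + 1) := by simp [laCol]

theorem laCol_lt (p : Fin (n + 1)) (c : Fin (n + 2)) (y : Fin (n + 1)) (h : y.val < p.val) :
    laCol op p c y = Fin.last (n + 1) := by simp only [laCol, if_pos h]

theorem laCol_ge (p : Fin (n + 1)) (c : Fin (n + 1)) (y : Fin (n + 1)) (h : p.val ≤ y.val) :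
    laCol op p c.castSucc y = (op (op p y) c).castSucc := by
  simp only [laCol, if_neg (not_lt.2 h), Fin.lastCases_castSucc]

theorem la_col_unique (hL : IsLAlgebra op 0)
    (ho : ∀ a b : Fin (n + 1), op a b = 0 ↔ b.val ≤ a.val)
    (p : Fin (n + 1)) (hp : ∀ y : Fin (n + 1), y.val < p.val → op y p = p)
    (hmin : ∀ q : Fin (n + 1), (∀ y : Fin (n + 1), y.val < q.val → op y q = q) →
      q.val ≤ p.val)
    (c : Fin (n + 2)) (hc : (op p (Fin.last n)).val < c.val)
    (g : Fin (n + 2) → Fin (n + 2) → Fin (n + 2)) (gL : IsLAlgebra g 0)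
    (go : ∀ a b : Fin (n + 2), g a b = 0 ↔ b.val ≤ a.val)
    (gr : ∀ a b : Fin (n + 1), g a.castSucc b.castSucc = (op a b).castSucc)
    (gc : g p.castSucc (Fin.last (n + 1)) = c) : g = laExt op (laCol op p c) := by
  have hrec : ∀ x y : Fin (n + 1), x.val ≤ y.val →
      g y.castSucc (Fin.last (n+1)) = g (op x y).castSucc (g x.castSucc (Fin.last (n+1))) := by
    intro x y h
    have h6 := gL.2.2.2.1 x.castSucc y.castSucc (Fin.last (n+1))
    rw [gr, gr, (ho y x).2 h, Fin.castSucc_zero, gL.1] at h6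
    exact h6.symm
  have hlow : ∀ x : Fin (n + 1), x.val < p.val →
      g x.castSucc (Fin.last (n+1)) = Fin.last (n+1) := by
    intro x hx
    have h1 := hrec x p hx.le
    rw [hp x hx] at h1
    by_contra hne
    set w := g x.castSucc (Fin.last (n+1)) with hw
    have hwl : w.val < (Fin.last (n+1)).val := by
      have := w.isLt
      have h3 : w.val ≠ (Fin.last (n+1)).val := fun h => hne (Fin.ext h)
      simp only [Fin.val_last] at *
      omega
    have hpw : p.castSucc.val ≤ w.val := by
      by_contra hcon
      rw [(go p.castSucc w).2 (by omega), gc] at h1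
      rw [h1] at hc
      simp at hc
    have := la_strict gL go p.castSucc w _ hpw hwl
    rw [h1] at this
    omega
  have hcol : ∀ y : Fin (n+1), g y.castSucc (Fin.last (n+1)) = laCol op p c y := by
    intro y
    by_cases hy : y.val < p.val
    · rw [hlow y hy, laCol_lt _ _ _ hy]
    · induction c using Fin.lastCases with
      | cast c =>
        rw [laCol_ge _ _ _ (by omega), hrec p y (by omega), gc, gr]
      | last =>
        rw [laCol_last]
        have key : ∀ (k : ℕ) (y : Fin (n + 1)), y.val = k →
            g y.castSucc (Fin.last (n+1)) = Fin.last (n+1) := by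
          intro k
          induction k using Nat.strong_induction_on with
          | _ k ih =>
          intro y hk
          rcases lt_trichotomy y.val p.val with h | h | h
          · exact hlow y h
          · rw [Fin.ext h, gc]
          · rw [hrec p y h.le, gc]
            exact ih _ (by have := la_dec hL ho p hp hmin _ y rfl h; omega) _ rfl
        exact key _ y rfl
  funext a b
  induction a using Fin.lastCases with
  | last => rw [laExt_last, go]; simp; omega
  | cast a =>
    induction b using Fin.lastCases with
    | last => rw [laExt_cl, hcol]
    | cast b => rw [laExt_cc, gr]

theorem la_col_exists (hL : IsLAlgebra op 0)
    (ho : ∀ a b : Fin (n + 1), op a b = 0 ↔ b.val ≤ a.val)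
    (p : Fin (n + 1)) (hp : ∀ y : Fin (n + 1), y.val < p.val → op y p = p)
    (c : Fin (n + 2)) (hc : (op p (Fin.last n)).val < c.val) :
    IsLAlgebra (laExt op (laCol op p c)) 0 ∧ (∀ a, laCol op p c a ≠ 0) ∧
      laCol op p c p = c := by
  have hlast : (Fin.last (n+1)) ≠ 0 := by simp
  induction c using Fin.lastCases with
  | last =>
    refine ⟨laExt_isL hL ho _ ?_ ?_ ?_ ?_, ?_, ?_⟩
    · intro a; rw [laCol_last]; exact hlast
    · rw [laCol_last]
    · intro a w; rw [laCol_last]; simp only [Fin.val_last]; omega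
    · intro x y h; rw [laCol_last, laCol_last, laExt_cl, laCol_last]
    · intro a; rw [laCol_last]; exact hlast
    · rw [laCol_last]
  | cast c =>
    simp only [Fin.val_castSucc] at hc
    have hne : ∀ a, laCol op p c.castSucc a ≠ 0 := by
      intro a
      by_cases ha : a.val < p.val
      · rw [laCol_lt _ _ _ ha]; exact hlast
      · rw [laCol_ge _ _ _ (by omega), Ne, Fin.castSucc_eq_zero_iff, ho]
        have := la_mono hL ho p a (Fin.last n) (by simp; omega)
        omega
    refine ⟨laExt_isL hL ho _ hne ?_ ?_ ?_, hne, ?_⟩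
    · by_cases h0 : (0 : Fin (n+1)).val < p.val
      · rw [laCol_lt _ _ _ h0]
      · exfalso
        have : p = 0 := Fin.ext (by simpa using h0)
        rw [this, hL.1] at hc
        simp at hc
        omega
    · intro a w
      by_cases ha : a.val < p.val
      · rw [laCol_lt _ _ _ ha]; simp only [Fin.val_last]; omega
      · rw [laCol_ge _ _ _ (by omega)]
        simp only [Fin.val_castSucc]
        have h1 := la_mono hL ho p w (Fin.last n) (by simp; omega)
        have h2 := la_mono hL ho (op p a) (op p w) c (by omega)
        rw [hL.2.2.2.1, (ho a p).2 (by omega), hL.1] at h2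
        exact h2
    · intro x y hxy
      by_cases hx : x.val < p.val
      · rw [laCol_lt _ _ _ hx, laExt_cl]
        by_cases hy : y.val < p.val
        · rw [laCol_lt _ _ _ hy, laCol_lt]
          have := la_le hL ho x y
          omega
        · rw [la_inv hL ho p hp x y hx (by omega)]
      · rw [laCol_ge _ _ _ (by omega), laCol_ge _ _ _ (by omega), laExt_cc]
        have h6 := hL.2.2.2.1 p x y
        rw [(ho x p).2 (by omega), hL.1] at h6
        rw [← h6, hL.2.2.2.1, (ho (op p y) (op p x)).2 (la_mono hL ho p x y hxy.le), hL.1]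
    · rw [laCol_ge _ _ _ le_rfl, hL.2.2.1, hL.1]

end LA

/-- The chain `Lₙ = {x₀ > x₁ > … }` is modelled by `Fin (n+1)`, where index `i`
stands for `xᵢ`; thus `xᵢ ≤ xⱼ` iff `j ≤ i`, the logical unit is `x₀ = 0`, and the
natural order condition reads `op a b = 0 ↔ b.val ≤ a.val`.

Given an L-algebra `op` on the chain `Fin (n+1)` whose natural order is this total order,
with smallest invariant element `p` (i.e. `p` is invariant and every invariant element `q`
satisfies `q ≥ p`, that is `q.val ≤ p.val`), and any `c` in the extended chain `Fin (n+2)`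
with `p·xₙ > c` (i.e. `(op p (Fin.last n)).val < c.val`), there is a unique L-algebra
structure on the chain `Fin (n+2)` (with the new least element `Fin.last (n+1)`) whose
natural order is the total order of the chain, which restricts to `op` on `Fin (n+1)`,
and which satisfies `p·x_{n+1} = c`. -/
theorem linear_L_algebra_unique_extension (n : ℕ)
    (op : Fin (n + 1) → Fin (n + 1) → Fin (n + 1))
    (hL : IsLAlgebra op 0)
    (horder : ∀ a b : Fin (n + 1), op a b = 0 ↔ b.val ≤ a.val)
    (p : Fin (n + 1))
    (hp : ∀ y : Fin (n + 1), y.val < p.val → op y p = p)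
    (hmin : ∀ q : Fin (n + 1), (∀ y : Fin (n + 1), y.val < q.val → op y q = q) →
      q.val ≤ p.val)
    (c : Fin (n + 2)) (hc : (op p (Fin.last n)).val < c.val) :
    ∃! op' : Fin (n + 2) → Fin (n + 2) → Fin (n + 2),
      IsLAlgebra op' 0 ∧
      (∀ a b : Fin (n + 2), op' a b = 0 ↔ b.val ≤ a.val) ∧
      (∀ a b : Fin (n + 1), op' a.castSucc b.castSucc = (op a b).castSucc) ∧
      op' p.castSucc (Fin.last (n + 1)) = c := by
  obtain ⟨h1, h2, h3⟩ := la_col_exists hL horder p hp c hc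
  refine ⟨laExt op (laCol op p c), ⟨h1, laExt_ord horder _ h2, laExt_cc _, ?_⟩, ?_⟩
  · rw [laExt_cl, h3]
  · rintro g ⟨gL, go, gr, gc⟩
    exact la_col_unique hL horder p hp hmin c hc g gL go gr gc
end

section
/- For n ≥ 2 and 1 ≤ m ≤ n−1, the number of L-algebra structures on the chain L_n = {x_0 > x_1 > … > x_{n−1}} (with natural order equal to this total order and logical unit x_0) whose smallest invariant element is x_m equals binom(n−2, m−1)·B(m−1), where B(k) denotes the k-th Bell number, i.e. the number of equivalence relations on a k-element set. -/
theorem lal_setoid_option {α : Type} [Fintype α] [DecidableEq α] :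
    Nat.card (Setoid (Option α)) = ∑ S : Finset α, Nat.card (Setoid S) := by
  classical
  let R : (Σ S : Finset α, Setoid S) → Option α → Option α → Prop := fun p x y =>
    match x, y with
    | none, none => True
    | none, some b => b ∉ p.1
    | some a, none => a ∉ p.1
    | some a, some b => (a ∉ p.1 ∧ b ∉ p.1) ∨
        ∃ (ha : a ∈ p.1) (hb : b ∈ p.1), p.2 ⟨a, ha⟩ ⟨b, hb⟩
  have hR : ∀ p, Equivalence (R p) := by
    rintro ⟨S, s⟩
    refine ⟨?_, ?_, ?_⟩
    · rintro (_ | a)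
      · trivial
      · by_cases h : a ∈ S
        · exact Or.inr ⟨h, h, s.refl _⟩
        · exact Or.inl ⟨h, h⟩
    · rintro (_ | a) (_ | b) h
      · trivial
      · exact h
      · exact h
      · rcases h with h | ⟨ha, hb, h⟩
        · exact Or.inl ⟨h.2, h.1⟩
        · exact Or.inr ⟨hb, ha, s.symm h⟩
    · rintro (_ | a) (_ | b) (_ | c) h1 h2
      · trivial
      · exact h2
      · trivial
      · rcases h2 with h | ⟨ha, hb, h⟩
        · exact h.2
        · exact absurd ha h1
      · exact h1
      · exact Or.inl ⟨h1, h2⟩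
      · rcases h1 with h | ⟨ha, hb, h⟩
        · exact h.1
        · exact absurd hb h2
      · rcases h1 with h | ⟨ha, hb, h⟩
        · rcases h2 with h' | ⟨ha', hb', h'⟩
          · exact Or.inl ⟨h.1, h'.2⟩
          · exact absurd ha' h.2
        · rcases h2 with h' | ⟨ha', hb', h'⟩
          · exact absurd hb h'.1
          · exact Or.inr ⟨ha, hb', s.trans h h'⟩
  let F : (Σ S : Finset α, Setoid S) → Setoid (Option α) := fun p => ⟨R p, hR p⟩
  have hF : Function.Bijective F := by
    constructor
    · rintro ⟨S, s⟩ ⟨T, t⟩ h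
      have h' : R ⟨S, s⟩ = R ⟨T, t⟩ := congrArg (fun q : Setoid (Option α) => q.r) h
      have hST : S = T := by
        ext a
        have : (a ∉ S) = (a ∉ T) := congrFun (congrFun h' none) (some a)
        exact not_iff_not.1 (iff_of_eq this)
      subst hST
      congr 1
      ext ⟨a, ha⟩ ⟨b, hb⟩
      have h2 := iff_of_eq (congrFun (congrFun h' (some a)) (some b))
      simp only [R, ha, hb, not_true_eq_false, and_self, false_or, exists_true_left] at h2
      exact h2
    · intro r
      refine ⟨⟨Finset.univ.filter (fun a => ¬ r none (some a)),
        ⟨fun x y => r (some x.1) (some y.1), ⟨fun x => r.refl _, fun h => r.symm h,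
          fun h h' => r.trans h h'⟩⟩⟩, ?_⟩
      apply Setoid.ext
      rintro (_ | a) (_ | b)
      · exact ⟨fun _ => r.refl _, fun _ => trivial⟩
      · change b ∉ Finset.univ.filter (fun a => ¬ r none (some a)) ↔ _
        simp
      · change a ∉ Finset.univ.filter (fun a => ¬ r none (some a)) ↔ _
        simp only [Finset.mem_filter, Finset.mem_univ, true_and, not_not]
        exact ⟨fun h => r.symm h, fun h => r.symm h⟩
      · change ((a ∉ Finset.univ.filter (fun a => ¬ r none (some a)) ∧
          b ∉ Finset.univ.filter (fun a => ¬ r none (some a))) ∨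
          ∃ (ha : a ∈ Finset.univ.filter (fun a => ¬ r none (some a)))
            (hb : b ∈ Finset.univ.filter (fun a => ¬ r none (some a))), r (some a) (some b)) ↔ _
        simp only [Finset.mem_filter, Finset.mem_univ, true_and, not_not]
        constructor
        · rintro (h | ⟨_, _, h⟩)
          · exact r.trans (r.symm h.1) h.2
          · exact h
        · intro h
          by_cases ha : r none (some a)
          · exact Or.inl ⟨ha, r.trans ha h⟩
          · exact Or.inr ⟨ha, fun hb => ha (r.trans hb (r.symm h)), h⟩
  have hfin : ∀ S : Finset α, Finite (Setoid S) := fun S =>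
    Finite.of_injective (fun s : Setoid S => s.r) (fun s t h => by
      apply Setoid.ext
      intro a b
      exact iff_of_eq (congrFun (congrFun h a) b))
  rw [← Nat.card_congr (Equiv.ofBijective F hF), Nat.card_sigma]

def lalSetoidCongr {α β : Type*} (e : α ≃ β) : Setoid α ≃ Setoid β where
  toFun s := s.comap e.symm
  invFun s := s.comap e
  left_inv s := by ext; simp [Setoid.comap_rel]
  right_inv s := by ext; simp [Setoid.comap_rel]

theorem lal_bell (k : ℕ) : Nat.card (Setoid (Fin (k + 1))) =
    ∑ j ∈ Finset.range (k + 1), k.choose j * Nat.card (Setoid (Fin j)) := by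
  rw [Nat.card_congr (lalSetoidCongr (finSuccEquiv k)), lal_setoid_option]
  have : ∀ S : Finset (Fin k), Nat.card (Setoid S) = Nat.card (Setoid (Fin S.card)) :=
    fun S => Nat.card_congr (lalSetoidCongr S.equivFin)
  simp only [this]
  rw [← Finset.powerset_univ,
    Finset.sum_powerset_apply_card (fun j => Nat.card (Setoid (Fin j)))]
  simp

def lalL (n : ℕ) : Set (ℕ → ℕ → ℕ) := {f |
  (∀ a b, (b ≤ a ∨ n ≤ b) → f a b = 0) ∧
  (∀ a b, a < b → b < n → 0 < f a b ∧ f a b < n) ∧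
  (∀ b, b < n → f 0 b = b) ∧
  (∀ x y z, x < y → y < z → z < n → f (f x y) (f x z) = f y z)}

def lalLm (n m : ℕ) : Set (ℕ → ℕ → ℕ) := {f | f ∈ lalL n ∧
  (∀ y, y < m → f y m = m) ∧ ∀ q, q < n → (∀ y, y < q → f y q = q) → q ≤ m}

def lalG (n m : ℕ) : Set (ℕ → ℕ) := {g |
  (∀ z, (z ≤ m ∨ n ≤ z) → g z = 0) ∧
  (∀ z, m < z → z < n → 0 < g z ∧ g z + 1 < n) ∧
  (∀ y z, m < y → y < z → z < n → g y < g z)}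

theorem lalL_mono {n : ℕ} {f : ℕ → ℕ → ℕ} (hf : f ∈ lalL n) {x y z : ℕ}
    (h1 : x < y) (h2 : y < z) (h3 : z < n) : f x y < f x z := by
  obtain ⟨a, b, c, d⟩ := hf
  by_contra h
  have := d x y z h1 h2 h3
  rw [a _ _ (Or.inl (by omega))] at this
  have := b y z h2 h3
  omega

theorem lalL_le {n : ℕ} {f : ℕ → ℕ → ℕ} (hf : f ∈ lalL n) {x : ℕ} :
    ∀ d y, x < y → y + d + 1 = n → f x y ≤ y := by
  suffices h : ∀ d y, x < y → y + d + 1 = n → f x y + d < n by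
    intro d y h1 h2
    have := h d y h1 h2
    omega
  intro d
  induction d with
  | zero => intro y h1 h2; exact (hf.2.1 x y h1 (by omega)).2
  | succ d ih =>
    intro y h1 h2
    have := ih (y + 1) (by omega) (by omega)
    have := lalL_mono hf h1 (Nat.lt_add_one y) (by omega)
    omega

theorem lalL_le' {n : ℕ} {f : ℕ → ℕ → ℕ} (hf : f ∈ lalL n) {x y : ℕ} (h : y < n) :
    f x y ≤ y := by
  by_cases hx : x < y
  · exact lalL_le hf (n - y - 1) y hx (by omega)
  · rw [hf.1 _ _ (Or.inl (by omega))]; omega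

theorem lalL_fix {n : ℕ} {f : ℕ → ℕ → ℕ} (hf : f ∈ lalL n) {x y z : ℕ} (h1 : x < y)
    (h2 : y ≤ z) (h3 : z < n) (h : f x y = y) : f x z = z := by
  induction z, h2 using Nat.le_induction with
  | base => exact h
  | succ z hz ih =>
    have := ih (by omega)
    have := lalL_mono hf (show x < z by omega) (Nat.lt_add_one z) h3
    have := lalL_le' hf (x := x) h3
    omega

theorem lalG_lt {n m : ℕ} {g : ℕ → ℕ} (hg : g ∈ lalG n m) {z : ℕ} (h1 : m < z) (h2 : z < n) :
    g z < z := by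
  have h : ∀ d y, m < y → y + d + 1 = n → g y + d + 1 < n := by
    intro d
    induction d with
    | zero => intro y h1 h2; exact (hg.2.1 y h1 (by omega)).2
    | succ d ih =>
      intro y h1 h2
      have := ih (y + 1) (by omega) (by omega)
      have := hg.2.2 y (y + 1) h1 (by omega) (by omega)
      omega
  have := h (n - z - 1) z h1 (by omega)
  omega

def lalExt (n m : ℕ) (A : ℕ → ℕ → ℕ) (g : ℕ → ℕ) (a b : ℕ) : ℕ :=
  if b ≤ a ∨ n ≤ b then 0 else
  if a < m then (if b < m then A a b else b) else
  if a = m then g b else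
  if g a < a then lalExt n m A g (g a) (g b) else 0
termination_by a

section
variable {n m : ℕ} {A : ℕ → ℕ → ℕ} {g : ℕ → ℕ}

theorem lalExt_zero {a b : ℕ} (h : b ≤ a ∨ n ≤ b) : lalExt n m A g a b = 0 := by
  rw [lalExt, if_pos h]

theorem lalExt_small {a b : ℕ} (h : a < b) (hm : m < n) (hb : b < m) :
    lalExt n m A g a b = A a b := by
  rw [lalExt, if_neg (by omega), if_pos (by omega), if_pos hb]

theorem lalExt_mid {a b : ℕ} (h : a < m) (hb : m ≤ b) (hn : b < n) :
    lalExt n m A g a b = b := by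
  rw [lalExt, if_neg (by omega), if_pos (by omega), if_neg (by omega)]

theorem lalExt_m {b : ℕ} (h : m < b) (hn : b < n) :
    lalExt n m A g m b = g b := by
  rw [lalExt, if_neg (by omega), if_neg (by omega), if_pos rfl]

theorem lalExt_rec (hg : g ∈ lalG n m) {a b : ℕ} (h : m < a) (hab : a < b) (hn : b < n) :
    lalExt n m A g a b = lalExt n m A g (g a) (g b) := by
  rw [lalExt, if_neg (by omega), if_neg (by omega), if_neg (by omega),
    if_pos (lalG_lt hg h (by omega))]

theorem lalExt_mem (hm1 : 1 ≤ m) (hm : m < n) (hA : A ∈ lalL m) (hg : g ∈ lalG n m) :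
    lalExt n m A g ∈ lalL n := by
  refine ⟨fun a b h => lalExt_zero h, ?_, ?_, ?_⟩
  · intro a
    induction a using Nat.strong_induction_on with
    | _ a ih =>
    intro b hab hb
    rcases lt_trichotomy a m with h | h | h
    · by_cases hbm : b < m
      · rw [lalExt_small hab hm hbm]
        have := hA.2.1 a b hab hbm
        omega
      · rw [lalExt_mid h (by omega) hb]; omega
    · subst h
      rw [lalExt_m hab hb]
      have := hg.2.1 b hab hb
      omega
    · rw [lalExt_rec hg h hab hb]
      have := hg.2.1 b (by omega) hb
      exact ih _ (lalG_lt hg h (by omega)) _ (hg.2.2 a b h hab hb) (by omega)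
  · intro b hb
    rcases Nat.eq_zero_or_pos b with h | h
    · subst h; exact lalExt_zero (by omega)
    · by_cases hbm : b < m
      · rw [lalExt_small h hm hbm, hA.2.2.1 b hbm]
      · exact lalExt_mid (by omega) (by omega) hb
  · intro x
    induction x using Nat.strong_induction_on with
    | _ x ih =>
    intro y z hxy hyz hz
    rcases lt_trichotomy x m with h | h | h
    · by_cases hzm : z < m
      · rw [lalExt_small hxy hm (by omega), lalExt_small (by omega) hm hzm,
          lalExt_small hyz hm hzm]
        have h1 := lalL_mono hA hxy hyz hzm
        have h2 := lalL_le' hA (x := x) hzm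
        rw [lalExt_small h1 hm (by omega)]
        exact hA.2.2.2 x y z hxy hyz hzm
      · rw [lalExt_mid (a := x) (b := z) h (by omega) hz]
        by_cases hym : y < m
        · rw [lalExt_small hxy hm hym]
          have := lalL_le' hA (x := x) hym
          rw [lalExt_mid (by omega) (by omega) hz, lalExt_mid (by omega) (by omega) hz]
        · rw [lalExt_mid (a := x) (b := y) h (by omega) (by omega)]
    · subst h
      rw [lalExt_m hxy (by omega), lalExt_m (by omega) hz, ← lalExt_rec hg hxy hyz hz]
    · rw [lalExt_rec hg h hxy (by omega), lalExt_rec hg h (by omega) hz,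
        lalExt_rec hg (by omega) hyz hz]
      have := hg.2.1 z (by omega) hz
      exact ih _ (lalG_lt hg h (by omega)) _ _ (hg.2.2 x y h hxy (by omega))
        (hg.2.2 y z (by omega) hyz hz) (by omega)

theorem lalExt_mem' (hm1 : 1 ≤ m) (hm : m < n) (hA : A ∈ lalL m) (hg : g ∈ lalG n m) :
    lalExt n m A g ∈ lalLm n m := by
  refine ⟨lalExt_mem hm1 hm hA hg, fun y hy => lalExt_mid hy le_rfl hm, ?_⟩
  intro q hq h
  by_contra hqm
  have h1 := h m (by omega)
  rw [lalExt_m (by omega) hq] at h1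
  have := lalG_lt hg (show m < q by omega) hq
  omega

end

theorem lalLm_lt {n m : ℕ} {f : ℕ → ℕ → ℕ} (hm : m < n) (hf : f ∈ lalLm n m) {z : ℕ}
    (h1 : m < z) (h2 : z < n) : f m z < z := by
  obtain ⟨hL, hinv, hmin⟩ := hf
  induction z using Nat.strong_induction_on with
  | _ z ih =>
  by_contra hz
  have hfz : f m z = z := le_antisymm (lalL_le' hL h2) (by omega)
  have key : ∀ y, y < z → f y z = z := by
    intro y
    induction y using Nat.strong_induction_on with
    | _ y ihy =>
    intro hy
    rcases lt_trichotomy y m with h | h | h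
    · exact lalL_fix hL h (by omega) h2 (hinv y h)
    · subst h; exact hfz
    · have h3 := ih y hy h (by omega)
      rw [← hL.2.2.2 m y z h hy h2, hfz]
      exact ihy _ h3 (by omega)
  have := hmin z h2 key
  omega

theorem lalLm_ext {n m : ℕ} {f : ℕ → ℕ → ℕ} (hm : m < n) (hf : f ∈ lalLm n m) :
    (fun a b => if b < m then f a b else 0) ∈ lalL m ∧ f m ∈ lalG n m ∧
    lalExt n m (fun a b => if b < m then f a b else 0) (f m) = f := by
  have hL := hf.1
  have hg : f m ∈ lalG n m := by
    refine ⟨fun z h => hL.1 _ _ h, ?_, fun y z h1 h2 h3 => lalL_mono hL h1 h2 h3⟩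
    intro z h1 h2
    have := lalLm_lt hm hf h1 h2
    have := hL.2.1 m z h1 h2
    omega
  refine ⟨⟨?_, ?_, ?_, ?_⟩, hg, ?_⟩
  · intro a b h
    by_cases hb : b < m
    · simp only [hb, if_true]; exact hL.1 _ _ (by omega)
    · simp [hb]
  · intro a b h hb
    simp only [hb, if_true]
    have := lalL_le' hL (x := a) (show b < n by omega)
    have := hL.2.1 a b h (by omega)
    omega
  · intro b hb
    simp only [hb, if_true]
    exact hL.2.2.1 b (by omega)
  · intro x y z h1 h2 h3
    have := lalL_le' hL (x := x) (show z < n by omega)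
    simp only [h3, show y < m by omega, show f x z < m by omega, if_true]
    exact hL.2.2.2 x y z h1 h2 (by omega)
  · funext a
    induction a using Nat.strong_induction_on with
    | _ a ih =>
    funext b
    by_cases h0 : b ≤ a ∨ n ≤ b
    · rw [lalExt_zero h0, hL.1 _ _ h0]
    · rcases lt_trichotomy a m with h | h | h
      · by_cases hb : b < m
        · rw [lalExt_small (by omega) hm hb, if_pos hb]
        · rw [lalExt_mid h (by omega) (by omega)]
          exact (lalL_fix hL h (by omega) (by omega) (hf.2.1 a h)).symm
      · subst h
        rw [lalExt_m (by omega) (by omega)]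
      · rw [lalExt_rec hg h (by omega) (by omega), ih _ (lalG_lt hg h (by omega))]
        exact hL.2.2.2 m a b h (by omega) (by omega)

def lalEquiv (n m : ℕ) (hm1 : 1 ≤ m) (hm : m < n) : lalLm n m ≃ lalL m × lalG n m where
  toFun f := (⟨_, (lalLm_ext hm f.2).1⟩, ⟨_, (lalLm_ext hm f.2).2.1⟩)
  invFun p := ⟨lalExt n m p.1.1 p.2.1, lalExt_mem' hm1 hm p.1.2 p.2.2⟩
  left_inv f := Subtype.ext (lalLm_ext hm f.2).2.2
  right_inv p := by
    obtain ⟨⟨A, hA⟩, ⟨g, hg⟩⟩ := p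
    refine Prod.ext (Subtype.ext ?_) (Subtype.ext ?_)
    · funext a b
      change (if b < m then lalExt n m A g a b else 0) = A a b
      split_ifs with hb
      · by_cases hab : a < b
        · exact lalExt_small hab hm hb
        · rw [lalExt_zero (by omega), hA.1 _ _ (by omega)]
      · rw [hA.1 _ _ (by omega)]
    · funext b
      change lalExt n m A g m b = g b
      by_cases hb : m < b ∧ b < n
      · exact lalExt_m hb.1 hb.2
      · rw [lalExt_zero (by omega), hg.1 _ (by omega)]

def lalGEquiv (n m : ℕ) (hm1 : 1 ≤ m) (hm : m < n) :
    lalG n m ≃ (Fin (n - 1 - m) ↪o Fin (n - 2)) where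
  toFun g := OrderEmbedding.ofStrictMono
    (fun i => ⟨g.1 (m + 1 + i) - 1, by
      have := g.2.2.1 (m + 1 + i) (by omega) (by omega)
      omega⟩) (by
      intro i j hij
      have := g.2.2.2 (m + 1 + i) (m + 1 + j) (by omega) (by have : i.1 < j.1 := hij; omega)
        (by omega)
      have := g.2.2.1 (m + 1 + i) (by omega) (by omega)
      rw [Fin.lt_def]
      simp only
      omega)
  invFun h := ⟨fun z => if hz : m < z ∧ z < n then (h ⟨z - m - 1, by omega⟩).1 + 1 else 0, by
    refine ⟨?_, ?_, ?_⟩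
    · intro z hz
      beta_reduce
      rw [dif_neg (by omega)]
    · intro z h1 h2
      beta_reduce
      rw [dif_pos ⟨h1, h2⟩]
      have := (h ⟨z - m - 1, by omega⟩).2
      omega
    · intro y z h1 h2 h3
      beta_reduce
      rw [dif_pos ⟨h1, by omega⟩, dif_pos ⟨by omega, h3⟩]
      have : h ⟨y - m - 1, by omega⟩ < h ⟨z - m - 1, by omega⟩ :=
        h.strictMono (by rw [Fin.lt_def]; simp only; omega)
      rw [Fin.lt_def] at this
      omega⟩
  left_inv g := by
    apply Subtype.ext
    funext z
    by_cases hz : m < z ∧ z < n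
    · have := g.2.2.1 z hz.1 hz.2
      simp only [hz, and_self, dif_pos]
      change g.1 (m + 1 + (z - m - 1)) - 1 + 1 = g.1 z
      rw [show m + 1 + (z - m - 1) = z by omega]
      omega
    · simp only [dif_neg hz]
      exact (g.2.1 z (by omega)).symm
  right_inv h := by
    ext i
    have : m < m + 1 + i.1 ∧ m + 1 + i.1 < n := by omega
    have h2 : m + 1 + i.1 - m - 1 = i.1 := by omega
    change (if hz : m < m + 1 + i.1 ∧ m + 1 + i.1 < n then
      (h ⟨m + 1 + i.1 - m - 1, by omega⟩).1 + 1 else 0) - 1 = (h i).1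
    rw [dif_pos this]
    simp [h2]

theorem lalG_card (n m : ℕ) (hm1 : 1 ≤ m) (hm : m < n) :
    Nat.card (lalG n m) = (n - 2).choose (m - 1) := by
  rw [Nat.card_congr (lalGEquiv n m hm1 hm), Nat.card_congr Set.powersetCard.ofFinEmbEquiv,
    Set.powersetCard.card, Nat.card_fin]
  rw [← Nat.choose_symm (show m - 1 ≤ n - 2 by omega)]
  congr 1
  omega

theorem lalLm_card (n m : ℕ) (hm1 : 1 ≤ m) (hm : m < n) :
    Nat.card (lalLm n m) = (n - 2).choose (m - 1) * Nat.card (lalL m) := by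
  rw [Nat.card_congr (lalEquiv n m hm1 hm), Nat.card_prod, lalG_card n m hm1 hm, mul_comm]

theorem lalL_lt {n : ℕ} (hn : 0 < n) {f : ℕ → ℕ → ℕ} (hf : f ∈ lalL n) (a b : ℕ) :
    f a b < n := by
  by_cases h : b ≤ a ∨ n ≤ b
  · rw [hf.1 _ _ h]; exact hn
  · exact (hf.2.1 a b (by omega) (by omega)).2

theorem lalL_finite (n : ℕ) (hn : 0 < n) : Finite (lalL n) := by
  let F : lalL n → (Fin n → Fin n → Fin n) := fun f a b => ⟨f.1 a b, lalL_lt hn f.2 a b⟩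
  refine Finite.of_injective F ?_
  intro f g h
  apply Subtype.ext
  funext a b
  by_cases hab : b ≤ a ∨ n ≤ b
  · rw [f.2.1 _ _ hab, g.2.1 _ _ hab]
  · have := congrFun (congrFun h ⟨a, by omega⟩) ⟨b, by omega⟩
    exact congrArg Fin.val this

theorem lalL_sum (n : ℕ) (hn : 2 ≤ n) :
    Nat.card (lalL n) = ∑ m : Fin (n - 1), Nat.card (lalLm n (m + 1)) := by
  have hfin := lalL_finite n (by omega)
  have : ∀ m : Fin (n - 1), Finite (lalLm n (m + 1)) := fun m =>
    Finite.of_injective (fun f : lalLm n (m + 1) => (⟨f.1, f.2.1⟩ : lalL n))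
      (fun f g h => Subtype.ext (congrArg (fun q : lalL n => q.1) h))
  rw [← Nat.card_sigma]
  symm
  let F : (Σ m : Fin (n - 1), lalLm n (m + 1)) → lalL n := fun p => ⟨p.2.1, p.2.2.1⟩
  refine Nat.card_congr (Equiv.ofBijective F ⟨?_, ?_⟩)
  · rintro ⟨m, f, hf⟩ ⟨m', f', hf'⟩ h
    have h : f = f' := congrArg (fun q : lalL n => q.1) h
    subst h
    have h1 := hf.2.2 (m' + 1) (by omega) hf'.2.1
    have h2 := hf'.2.2 (m + 1) (by omega) hf.2.1
    have : m = m' := by ext; omega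
    subst this
    rfl
  · rintro ⟨f, hf⟩
    classical
    let P : ℕ → Prop := fun q => ∀ y, y < q → f y q = q
    have hP1 : P 1 := by
      intro y hy
      have : y = 0 := by omega
      subst this
      exact hf.2.2.1 1 (by omega)
    have h1 : 1 ≤ Nat.findGreatest P (n - 1) := Nat.le_findGreatest (by omega) hP1
    have h2 : Nat.findGreatest P (n - 1) ≤ n - 1 := Nat.findGreatest_le _
    have h3 : P (Nat.findGreatest P (n - 1)) := Nat.findGreatest_spec (m := 1) (by omega) hP1
    refine ⟨⟨⟨Nat.findGreatest P (n - 1) - 1, by omega⟩, f, ?_⟩, rfl⟩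
    simp only [Nat.sub_add_cancel h1]
    exact ⟨hf, h3, fun q hq hqq => Nat.le_findGreatest (by omega) hqq⟩

theorem lalL_card (k : ℕ) : Nat.card (lalL (k + 1)) = Nat.card (Setoid (Fin k)) := by
  induction k using Nat.strong_induction_on with
  | _ k ih =>
  rcases k with _ | k
  · have h1 : Nat.card (Setoid (Fin 0)) = 1 := by
      rw [Nat.card_eq_one_iff_unique]
      exact ⟨⟨fun a b => Setoid.ext fun x => x.elim0⟩, ⟨⊥⟩⟩
    rw [h1, Nat.card_eq_one_iff_unique]
    refine ⟨⟨fun f g => Subtype.ext ?_⟩, ⟨⟨fun _ _ => 0, ?_⟩⟩⟩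
    · funext a b
      rw [f.2.1 _ _ (by omega), g.2.1 _ _ (by omega)]
    · refine ⟨fun _ _ _ => rfl, ?_, ?_, fun _ _ _ _ _ _ => rfl⟩
      · intro a b _ _; omega
      · intro b hb; change 0 = b; omega
  · rw [lalL_sum _ (by omega), lal_bell, ← Fin.sum_univ_eq_sum_range
      (fun j => k.choose j * Nat.card (Setoid (Fin j))) (k + 1)]
    refine Finset.sum_congr rfl fun m _ => ?_
    rw [lalLm_card _ _ (by omega) (by have := m.2; omega), ih m (by have := m.2; omega)]
    rfl

/-- The chain `Lₙ = {x₀ > x₁ > … > x_{n-1}}` is modelled by `Fin n`, where index `i`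
stands for `xᵢ`; thus `xᵢ ≤ xⱼ` iff `j ≤ i`, the logical unit is `x₀`, and the
natural order condition reads `op a b = x₀ ↔ b.val ≤ a.val`.

For `n ≥ 2` and `1 ≤ m ≤ n - 1`, the number of L-algebra structures on the chain
`Fin n` (with natural order equal to this total order and logical unit `x₀`) whose
smallest invariant element is `x_m` (i.e. `x_m` is invariant and every invariant
element `q` satisfies `q ≥ x_m`, that is `q.val ≤ m`) equals
`binom(n-2, m-1) · B(m-1)`, where the Bell number `B(k)` is the number of
equivalence relations (`Setoid`s) on a `k`-element set. -/
theorem num_linear_L_algebras_with_smallest_invariant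
    (n m : ℕ) (hn : 2 ≤ n) (hm1 : 1 ≤ m) (hm2 : m ≤ n - 1) :
    Nat.card {op : Fin n → Fin n → Fin n //
      IsLAlgebra op ⟨0, by omega⟩ ∧
      (∀ a b : Fin n, op a b = ⟨0, by omega⟩ ↔ b.val ≤ a.val) ∧
      (∀ y : Fin n, y.val < m → op y ⟨m, by omega⟩ = ⟨m, by omega⟩) ∧
      (∀ q : Fin n, (∀ y : Fin n, y.val < q.val → op y q = q) → q.val ≤ m)} =
    (n - 2).choose (m - 1) * Nat.card (Setoid (Fin (m - 1))) := by
  have hm : m < n := by omega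
  have hn0 : 0 < n := by omega
  obtain ⟨k, rfl⟩ : ∃ k, m = k + 1 := ⟨m - 1, by omega⟩
  rw [Nat.add_sub_cancel, ← lalL_card k]
  have hc := lalLm_card n (k + 1) hm1 hm
  rw [Nat.add_sub_cancel] at hc
  rw [← hc]
  symm
  let F : lalLm n (k + 1) → (Fin n → Fin n → Fin n) :=
    fun f a b => ⟨f.1 a b, lalL_lt hn0 f.2.1 a b⟩
  have hFv : ∀ f a b, (F f a b).1 = f.1 a b := fun _ _ _ => rfl
  have hF1 : Function.Injective F := by
    intro f g h
    apply Subtype.ext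
    funext a b
    by_cases hab : b ≤ a ∨ n ≤ b
    · rw [f.2.1.1 _ _ hab, g.2.1.1 _ _ hab]
    · have := congrFun (congrFun h ⟨a, by omega⟩) ⟨b, by omega⟩
      exact congrArg Fin.val this
  have hord : ∀ f : lalLm n (k + 1), ∀ a b, b < n → (f.1 a b = 0 ↔ b ≤ a) := by
    intro f a b hb
    constructor
    · intro h
      by_contra hab
      have := f.2.1.2.1 a b (by omega) hb
      omega
    · intro h; exact f.2.1.1 _ _ (Or.inl h)
  have hz : ∀ f : lalLm n (k + 1), ∀ a b, b ≤ a → f.1 a b = 0 := fun f a b h =>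
    f.2.1.1 _ _ (Or.inl h)
  have hcyc : ∀ f : lalLm n (k + 1), ∀ x y z : ℕ, x < y → y < n → z < n →
      f.1 (f.1 x y) (f.1 x z) = f.1 (f.1 y x) (f.1 y z) := by
    intro f x y z hxy hy hz'
    rw [hz f y x (by omega), f.2.1.2.2.1 _ (lalL_lt hn0 f.2.1 y z)]
    rcases lt_trichotomy y z with h | h | h
    · exact f.2.1.2.2.2 x y z hxy h hz'
    · subst h
      rw [hz f _ _ le_rfl, hz f _ _ le_rfl]
    · rw [hz f y z (by omega)]
      apply hz
      by_cases hxz : x < z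
      · exact (lalL_mono f.2.1 hxz h hy).le
      · rw [hz f x z (by omega)]; omega
  refine Nat.card_congr (Equiv.ofBijective (fun f => ⟨F f, ⟨?_, ?_, ?_, ?_, ?_⟩, ?_, ?_, ?_⟩)
    ⟨?_, ?_⟩)
  · intro x; exact Fin.ext (f.2.1.2.2.1 _ x.2)
  · intro x; exact Fin.ext (hz f _ _ (Nat.zero_le _))
  · intro x; exact Fin.ext (hz f _ _ le_rfl)
  · intro x y z
    apply Fin.ext
    simp only [hFv]
    rcases lt_trichotomy x.1 y.1 with h | h | h
    · exact hcyc f x y z h y.2 z.2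
    · rw [h]
    · exact (hcyc f y x z h x.2 z.2).symm
  · intro x y h1 h2
    have h1 := (hord f x y y.2).1 (congrArg Fin.val h1)
    have h2 := (hord f y x x.2).1 (congrArg Fin.val h2)
    exact Fin.ext (by omega)
  · intro a b
    rw [Fin.ext_iff]
    exact hord f a b b.2
  · intro y hy
    exact Fin.ext (f.2.2.1 y hy)
  · intro q hq
    refine f.2.2.2 q q.2 fun y hy => ?_
    exact congrArg Fin.val (hq ⟨y, by omega⟩ hy)
  · intro f g h
    exact hF1 (congrArg Subtype.val h)
  · rintro ⟨op, ⟨h1, h2, h3, h4, h5⟩, h6, h7, h8⟩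
    let f : ℕ → ℕ → ℕ := fun a b => if h : a < n ∧ b < n then (op ⟨a, h.1⟩ ⟨b, h.2⟩).1 else 0
    have hfv : ∀ a b (ha : a < n) (hb : b < n), f a b = (op ⟨a, ha⟩ ⟨b, hb⟩).1 := by
      intro a b ha hb
      simp only [f, dif_pos (And.intro ha hb)]
    have hfo : ∀ a b : Fin n, f a.1 b.1 = (op a b).1 := fun a b => hfv a b a.2 b.2
    have hf : f ∈ lalLm n (k + 1) := by
      refine ⟨⟨?_, ?_, ?_, ?_⟩, ?_, ?_⟩
      · intro a b hab
        by_cases h : a < n ∧ b < n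
        · rw [hfv a b h.1 h.2, (h6 _ _).2 (show b ≤ a by omega)]
        · simp only [f, dif_neg h]
      · intro a b hab hb
        rw [hfv a b (by omega) hb]
        refine ⟨Nat.pos_of_ne_zero fun h => ?_, Fin.is_lt _⟩
        have := (h6 ⟨a, by omega⟩ ⟨b, hb⟩).1 (Fin.ext h)
        simp only at this
        omega
      · intro b hb
        rw [hfv 0 b hn0 hb, h1]
      · intro x y z hxy hyz hz
        have hx : x < n := by omega
        have hy : y < n := by omega
        rw [hfv x y hx hy, hfv x z hx hz, hfv y z hy hz, hfo, h4,
          (h6 ⟨y, hy⟩ ⟨x, hx⟩).2 (show x ≤ y by omega), h1]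
      · intro y hy
        rw [hfv y (k + 1) (by omega) hm, h7 _ hy]
      · intro q hq hqq
        refine h8 ⟨q, hq⟩ fun y hy => Fin.ext ?_
        rw [← hfo]
        exact hqq y hy
    refine ⟨⟨f, hf⟩, Subtype.ext ?_⟩
    funext a b
    exact Fin.ext (hfo a b)
end

section
/- Let X be a finite regular L-algebra and x ∈ X. If x is dense (i.e. there exists y ∈ X with y ≤ x and x·y = y), then x = e. -/
/-- In a finite regular L-algebra, every dense element equals the logical unit:
if there exists `y ≤ x` (i.e. `y·x = e`) with `x·y = y`, then `x = e`. -/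
theorem finite_regular_L_algebra_dense_eq_unit
    {X : Type*} [Fintype X] (op : X → X → X) (e : X)
    (hL : IsLAlgebra op e)
    (hsemireg : ∀ x y z, op (op (op x y) z) (op (op y x) z) = op (op (op x y) z) z)
    (hreg : ∀ x y, op x y = e → ∃ z, op x z = e ∧ op z x = y)
    (x : X) (hdense : ∃ y, op y x = e ∧ op x y = y) :
    x = e := by
  obtain ⟨h1, h2, h3, _, _⟩ := hL
  obtain ⟨y, hy, hxy⟩ := hdense
  have hK : ∀ z w, op w (op z w) = e := by
    intro z w
    have h := hsemireg z e w
    simpa [h1, h2, h3] using h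
  let f : {z // op y z = e} → {z // op y z = e} := fun z => ⟨op z.1 y, hK _ _⟩
  have hs : Function.Surjective f := by
    rintro ⟨w, hw⟩
    obtain ⟨z, hz, hzw⟩ := hreg y w hw
    exact ⟨⟨z, hz⟩, Subtype.ext hzw⟩
  have hi : Function.Injective f := Finite.injective_iff_surjective.mpr hs
  have h := @hi ⟨x, hy⟩ ⟨e, h2 y⟩ (Subtype.ext (by simp [f, hxy, h1]))
  exact congrArg Subtype.val h
end

section
/- Let X be a finite regular L-algebra, and let x, y ∈ X be distinct elements that are both covered by the logical unit e (i.e. x < e, y < e, and there is no z with x < z < e or y < z < e, in the natural order). Then x·y = y. -/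
/-- In a finite regular L-algebra, if `x ≠ y` are both covered by the logical unit `e`
in the natural order (`a ≤ b ⟺ a·b = e`), then `x·y = y`. -/
theorem finite_regular_L_algebra_coatoms
    {X : Type*} [Fintype X] (op : X → X → X) (e : X)
    (hL : IsLAlgebra op e)
    (hsemireg : ∀ x y z, op (op (op x y) z) (op (op y x) z) = op (op (op x y) z) z)
    (hreg : ∀ x y, op x y = e → ∃ z, op x z = e ∧ op z x = y)
    (x y : X) (hxy : x ≠ y)
    (hx : x ≠ e ∧ ∀ z, op x z = e → z = x ∨ z = e)   -- x is covered by e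
    (hy : y ≠ e ∧ ∀ z, op y z = e → z = y ∨ z = e)   -- y is covered by e
    : op x y = y := by
  obtain ⟨h1, h2, h3, -, -⟩ := hL
  have h := hsemireg x e y
  rw [h2, h1, h1, h3] at h
  rcases hy.2 _ h with h' | h'
  · exact h'
  · rcases hx.2 _ h' with h'' | h''
    · exact absurd h''.symm hxy
    · exact absurd h'' hy.1
end

section
/- If X is a semiregular L-algebra, then x ≤ y·x for all x, y ∈ X; that is, x·(y·x) = e holds for all x, y ∈ X. -/
/-- In a semiregular L-algebra, `x ≤ y·x` for all `x, y`; that is, `x·(y·x) = e`. -/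
theorem semiregular_L_algebra_le
    {X : Type*} (op : X → X → X) (e : X)
    (hL : IsLAlgebra op e)
    (hsemireg : ∀ x y z, op (op (op x y) z) (op (op y x) z) = op (op (op x y) z) z) :
    ∀ x y : X, op x (op y x) = e := by
  obtain ⟨h1, h2, h3, -, -⟩ := hL
  intro x y
  have h := hsemireg y e x
  rwa [h2, h1, h1, h3] at h
end
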